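/- arXiv:math/0212105 — 8 statements merged into one kernel-verified Lean document; each statement's English description precedes it below -/
import Mathlib

section
/- Let γ > 0 and δ ∈ ℝ. Then: (i) the improper integral ∫₀¹ e^{i x^{-γ}} x^{δ} dx exists, i.e. the limit of ∫_ε¹ e^{i x^{-γ}} x^{δ} dx as ε → 0⁺ exists in ℂ, if and only if γ + δ + 1 > 0; and (ii) the function x ↦ e^{i x^{-γ}} x^{δ} is Lebesgue integrable on (0,1) if and only if δ > -1. -/
open MeasureTheory Filter

/-!
Differentiation gives `d/dx (i/γ · e^{i x^{-γ}}) = e^{i x^{-γ}} x^{-γ-1}`, so the integrand with the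
critical exponent `-γ-1` has a primitive that is bounded but has no limit at `0`. Multiplying by
`x^p` with `p > 0` restores convergence (Dirichlet's test). Conversely, multiplying by `x^p` with
`p ≥ 0` preserves convergence (Abel's test), so convergence for some `δ ≤ -γ-1` would propagate to
the critical exponent. Absolute integrability only sees `x^δ`, because the oscillating factor has
modulus one.
-/

open Set
open scoped Topology

theorem uIcc_subset_Ioc_of_mem {α : Type*} [LinearOrder α] {a b ε : α} (hε : ε ∈ Ioc a b) :
    uIcc ε b ⊆ Ioc a b := by
  rw [uIcc_of_le hε.2]
  exact Icc_subset_Ioc_left hε.1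

theorem exists_norm_le_of_continuousOn_Ioc_of_tendsto {α E : Type*} [LinearOrder α]
    [TopologicalSpace α] [T1Space α] [CompactIccSpace α] [SeminormedAddCommGroup E] {a b : α}
    {G : α → E} {l : E} (hG : ContinuousOn G (Ioc a b))
    (hl : Tendsto G (𝓝[>] a) (𝓝 l)) : ∃ C, ∀ x ∈ Ioc a b, ‖G x‖ ≤ C := by
  have hcont : ContinuousOn (Function.update G a l) (Icc a b) := by
    rw [continuousOn_update_iff, Icc_sdiff_left]
    exact ⟨hG, fun _ ↦ hl.mono_left (nhdsWithin_mono a Ioc_subset_Ioi_self)⟩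
  obtain ⟨C, hC⟩ := isCompact_Icc.exists_bound_of_continuousOn hcont
  refine ⟨C, fun x hx ↦ ?_⟩
  simpa only [Function.update_of_ne hx.1.ne'] using hC x (Ioc_subset_Icc_self hx)

section ImproperIntegral

variable {E : Type*} [NormedAddCommGroup E] [NormedSpace ℝ E] {a b : ℝ}

/-- Existence of the improper integral `∫_a^b f` as the limit of `∫_ε^b f` for `ε → a⁺`; this is
conditional convergence, weaker than Lebesgue integrability on `(a, b]`. The definition is meant for
`f` integrable on every `[ε, b]` with `a < ε`: where integrability fails, the Bochner integral is
`0` by convention. -/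
def ImproperIntervalIntegrable (f : ℝ → E) (a b : ℝ) : Prop :=
  ∃ L, Tendsto (fun ε ↦ ∫ x in ε..b, f x) (𝓝[>] a) (𝓝 L)

theorem ImproperIntervalIntegrable.congr {f g : ℝ → E} (hf : ImproperIntervalIntegrable f a b)
    (hab : a < b) (hfg : EqOn f g (Ioc a b)) : ImproperIntervalIntegrable g a b := by
  obtain ⟨L, hL⟩ := hf
  refine ⟨L, hL.congr' ?_⟩
  filter_upwards [Ioc_mem_nhdsGT hab] with ε hε
  exact intervalIntegral.integral_congr (hfg.mono (uIcc_subset_Ioc_of_mem hε))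

theorem improperIntervalIntegrable_of_integrableOn {f : ℝ → E} (hab : a < b)
    (hf : IntegrableOn f (Ioc a b)) : ImproperIntervalIntegrable f a b := by
  have hcont : ContinuousOn (fun ε ↦ ∫ x in ε..b, f x) (Icc a b) := by
    rw [← integrableOn_Icc_iff_integrableOn_Ioc, ← uIcc_of_le hab.le] at hf
    rw [← uIcc_of_le hab.le]
    exact intervalIntegral.continuousOn_primitive_interval_left hf
  refine ⟨_, (hcont a (left_mem_Icc.2 hab.le)).tendsto.mono_left ?_⟩
  exact nhdsWithin_le_of_mem (Icc_mem_nhdsGT hab)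

variable [CompleteSpace E]

theorem hasDerivWithinAt_integral_left {g : ℝ → E} (hg : ContinuousOn g (Ioc a b)) {x : ℝ}
    (hx : x ∈ Ioc a b) :
    HasDerivWithinAt (fun u ↦ ∫ t in u..b, g t) (-g x) (Ioc a b) x := by
  obtain ⟨c, hac, hcx⟩ := exists_between hx.1
  have hgc : ContinuousOn g (Icc c b) := hg.mono (Icc_subset_Ioc_left hac)
  have hxc : x ∈ Icc c b := ⟨hcx.le, hx.2⟩
  have : Fact (x ∈ Icc c b) := ⟨hxc⟩
  have hderiv : HasDerivWithinAt (fun u ↦ ∫ t in u..b, g t) (-g x) (Icc c b) x :=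
    intervalIntegral.integral_hasDerivWithinAt_left
      (hg.mono (uIcc_subset_Ioc_of_mem hx)).intervalIntegrable
      (hgc.stronglyMeasurableAtFilter_nhdsWithin measurableSet_Icc x) (hgc x hxc)
  refine hderiv.mono_of_mem_nhdsWithin ?_
  filter_upwards [self_mem_nhdsWithin, mem_nhdsWithin_of_mem_nhds (Ioi_mem_nhds hcx)]
    with y hy hcy using ⟨(mem_Ioi.1 hcy).le, hy.2⟩

theorem improperIntervalIntegrable_iff_exists_tendsto {G g : ℝ → E} (hab : a < b)
    (hG : ∀ x ∈ Ioc a b, HasDerivWithinAt G (g x) (Ioc a b) x) (hg : ContinuousOn g (Ioc a b)) :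
    ImproperIntervalIntegrable g a b ↔ ∃ l, Tendsto G (𝓝[>] a) (𝓝 l) := by
  have ftc : ∀ᶠ ε in 𝓝[>] a, ∫ x in ε..b, g x = G b - G ε := by
    filter_upwards [Ioc_mem_nhdsGT hab] with ε hε
    have hsub : Icc ε b ⊆ Ioc a b := Icc_subset_Ioc_left hε.1
    exact intervalIntegral.integral_eq_sub_of_hasDerivAt_of_le hε.2
      (fun x hx ↦ (hG x (hsub hx)).continuousWithinAt.mono hsub)
      (fun x hx ↦ (hG x (hsub (Ioo_subset_Icc_self hx))).hasDerivAt
        (Ioc_mem_nhds (hε.1.trans hx.1) hx.2))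
      ((hg.mono hsub).intervalIntegrable_of_Icc hε.2)
  constructor
  · rintro ⟨L, hL⟩
    refine ⟨G b - L, (hL.const_sub (G b)).congr' ?_⟩
    filter_upwards [ftc] with ε hε
    rw [hε, sub_sub_cancel]
  · rintro ⟨l, hl⟩
    exact ⟨G b - l, (hl.const_sub (G b)).congr' (ftc.mono fun _ hε ↦ hε.symm)⟩

section Convergence

variable {φ φ' : ℝ → ℝ} {G g : ℝ → E}

theorem ImproperIntervalIntegrable.smul_of_tendsto_smul_primitive {l : E} {C : ℝ} (hab : a < b)
    (hφ : ∀ x ∈ Ioc a b, HasDerivWithinAt φ (φ' x) (Ioc a b) x) (hφ' : IntegrableOn φ' (Ioc a b))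
    (hG : ∀ x ∈ Ioc a b, HasDerivWithinAt G (g x) (Ioc a b) x) (hg : ContinuousOn g (Ioc a b))
    (hC : ∀ x ∈ Ioc a b, ‖G x‖ ≤ C) (hl : Tendsto (fun x ↦ φ x • G x) (𝓝[>] a) (𝓝 l)) :
    ImproperIntervalIntegrable (fun x ↦ φ x • g x) a b := by
  have hGcont : ContinuousOn G (Ioc a b) := fun x hx ↦ (hG x hx).continuousWithinAt
  have hint : IntegrableOn (fun x ↦ φ' x • G x) (Ioc a b) :=
    hφ'.smul_bdd C (hGcont.aestronglyMeasurable measurableSet_Ioc)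
      (ae_restrict_of_forall_mem measurableSet_Ioc hC)
  obtain ⟨K, hK⟩ := improperIntervalIntegrable_of_integrableOn hab hint
  refine ⟨φ b • G b - l - K, ((hl.const_sub (φ b • G b)).sub hK).congr' ?_⟩
  filter_upwards [Ioc_mem_nhdsGT hab] with ε hε
  have hsub := uIcc_subset_Ioc_of_mem hε
  have hφ'ε : IntervalIntegrable φ' volume ε b :=
    (intervalIntegrable_iff_integrableOn_Ioc_of_le hε.2).2
      (hφ'.mono_set (Ioc_subset_Ioc_left hε.1.le))
  exact (intervalIntegral.integral_smul_deriv_eq_deriv_smul_of_hasDerivWithinAt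
    (fun x hx ↦ (hφ x (hsub hx)).mono hsub) (fun x hx ↦ (hG x (hsub hx)).mono hsub)
    hφ'ε (hg.mono hsub).intervalIntegrable).symm

theorem ImproperIntervalIntegrable.smul_of_bounded_primitive {C : ℝ} (hab : a < b)
    (hφ : ∀ x ∈ Ioc a b, HasDerivWithinAt φ (φ' x) (Ioc a b) x) (hφ' : IntegrableOn φ' (Ioc a b))
    (hφ0 : Tendsto φ (𝓝[>] a) (𝓝 0))
    (hG : ∀ x ∈ Ioc a b, HasDerivWithinAt G (g x) (Ioc a b) x) (hg : ContinuousOn g (Ioc a b))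
    (hC : ∀ x ∈ Ioc a b, ‖G x‖ ≤ C) :
    ImproperIntervalIntegrable (fun x ↦ φ x • g x) a b := by
  have hbdd : IsBoundedUnder (· ≤ ·) (𝓝[>] a) (norm ∘ G) :=
    isBoundedUnder_of_eventually_le (a := C) (mem_of_superset (Ioc_mem_nhdsGT hab) hC)
  exact .smul_of_tendsto_smul_primitive hab hφ hφ' hG hg hC (hφ0.zero_smul_isBoundedUnder_le hbdd)

theorem ImproperIntervalIntegrable.smul {c : ℝ} (hgi : ImproperIntervalIntegrable g a b)
    (hab : a < b) (hg : ContinuousOn g (Ioc a b))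
    (hφ : ∀ x ∈ Ioc a b, HasDerivWithinAt φ (φ' x) (Ioc a b) x) (hφ' : IntegrableOn φ' (Ioc a b))
    (hφc : Tendsto φ (𝓝[>] a) (𝓝 c)) :
    ImproperIntervalIntegrable (fun x ↦ φ x • g x) a b := by
  have hG : ∀ x ∈ Ioc a b,
      HasDerivWithinAt (fun u ↦ -∫ t in u..b, g t) (g x) (Ioc a b) x := fun x hx ↦ by
    simpa only [neg_neg] using (hasDerivWithinAt_integral_left hg hx).fun_neg
  obtain ⟨l, hl⟩ := (improperIntervalIntegrable_iff_exists_tendsto hab hG hg).1 hgi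
  obtain ⟨C, hC⟩ :=
    exists_norm_le_of_continuousOn_Ioc_of_tendsto (fun x hx ↦ (hG x hx).continuousWithinAt) hl
  exact .smul_of_tendsto_smul_primitive hab hφ hφ' hG hg hC (hφc.smul hl)

end Convergence

section Rpow

variable {p : ℝ} {g : ℝ → E}

theorem hasDerivWithinAt_rpow_const_Ioc (p : ℝ) {x : ℝ} (hx : x ∈ Ioc 0 b) :
    HasDerivWithinAt (fun y : ℝ ↦ y ^ p) (p * x ^ (p - 1)) (Ioc 0 b) x :=
  (Real.hasDerivAt_rpow_const (.inl hx.1.ne')).hasDerivWithinAt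

theorem integrableOn_mul_rpow_sub_one (hp : 0 ≤ p) (b : ℝ) :
    IntegrableOn (fun x : ℝ ↦ p * x ^ (p - 1)) (Ioc 0 b) :=
  intervalIntegral.integrableOn_deriv_of_nonneg (Real.continuous_rpow_const hp).continuousOn
    (fun _ hx ↦ Real.hasDerivAt_rpow_const (.inl hx.1.ne'))
    (fun _ hx ↦ mul_nonneg hp (Real.rpow_nonneg hx.1.le _))

theorem tendsto_rpow_const_nhdsGT_zero (hp : 0 ≤ p) :
    Tendsto (fun x : ℝ ↦ x ^ p) (𝓝[>] 0) (𝓝 (0 ^ p)) :=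
  ((Real.continuous_rpow_const hp).tendsto 0).mono_left nhdsWithin_le_nhds

theorem ImproperIntervalIntegrable.rpow_smul (hgi : ImproperIntervalIntegrable g 0 b) (hb : 0 < b)
    (hg : ContinuousOn g (Ioc 0 b)) (hp : 0 ≤ p) :
    ImproperIntervalIntegrable (fun x ↦ x ^ p • g x) 0 b :=
  hgi.smul hb hg (fun _ ↦ hasDerivWithinAt_rpow_const_Ioc p) (integrableOn_mul_rpow_sub_one hp b)
    (tendsto_rpow_const_nhdsGT_zero hp)

theorem ImproperIntervalIntegrable.rpow_smul_of_bounded_primitive {G : ℝ → E} {C : ℝ} (hb : 0 < b)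
    (hG : ∀ x ∈ Ioc 0 b, HasDerivWithinAt G (g x) (Ioc 0 b) x) (hg : ContinuousOn g (Ioc 0 b))
    (hC : ∀ x ∈ Ioc 0 b, ‖G x‖ ≤ C) (hp : 0 < p) :
    ImproperIntervalIntegrable (fun x ↦ x ^ p • g x) 0 b := by
  have hp0 := tendsto_rpow_const_nhdsGT_zero hp.le
  rw [Real.zero_rpow hp.ne'] at hp0
  exact .smul_of_bounded_primitive hb (fun _ ↦ hasDerivWithinAt_rpow_const_Ioc p)
    (integrableOn_mul_rpow_sub_one hp.le b) hp0 hG hg hC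

end Rpow

end ImproperIntegral

theorem eq_of_periodic_of_tendsto_atTop {α X : Type*} [AddCommGroup α] [LinearOrder α]
    [IsOrderedAddMonoid α] [Archimedean α] [TopologicalSpace X] [T2Space X] {f : α → X} {c : α}
    {l : X} (hf : Function.Periodic f c) (hc : 0 < c) (hl : Tendsto f atTop (𝓝 l)) (x : α) :
    f x = l := by
  have hshift : Tendsto (fun n : ℕ ↦ x + n • c) atTop atTop :=
    tendsto_atTop_add_const_left _ x (tendsto_id.atTop_nsmul_const hc)
  refine tendsto_nhds_unique (tendsto_const_nhds.congr fun n ↦ ?_) (hl.comp hshift)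
  exact (hf.nsmul n x).symm

theorem not_tendsto_exp_I_mul_atTop (l : ℂ) :
    ¬Tendsto (fun t : ℝ ↦ Complex.exp (Complex.I * t)) atTop (𝓝 l) := fun hl ↦ by
  have hper : Function.Periodic (fun t : ℝ ↦ Complex.exp (Complex.I * t)) (2 * Real.pi) := by
    intro t
    simpa [mul_comm] using Complex.exp_mul_I_periodic t
  have hconst := eq_of_periodic_of_tendsto_atTop hper Real.two_pi_pos hl
  have hone : (1 : ℂ) = l := by simpa using hconst 0
  have hneg : (-1 : ℂ) = l := by simpa [mul_comm Complex.I] using hconst Real.pi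
  norm_num [← hneg] at hone

section RpowPhase

variable {γ b : ℝ}

/-- The oscillating factor `e^{i x^{-γ}}`, whose phase `x^{-γ}` blows up at `0⁺` when `γ > 0`. -/
noncomputable def rpowPhase (γ x : ℝ) : ℂ :=
  Complex.exp (Complex.I * ((x ^ (-γ) : ℝ) : ℂ))

theorem norm_rpowPhase (γ x : ℝ) : ‖rpowPhase γ x‖ = 1 := by
  rw [rpowPhase, mul_comm, Complex.norm_exp_ofReal_mul_I]

theorem continuousOn_rpowPhase_mul_rpow (γ q : ℝ) :
    ContinuousOn (fun x : ℝ ↦ rpowPhase γ x * ((x ^ q : ℝ) : ℂ)) (Ioi 0) := by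
  have hrpow (r : ℝ) : ContinuousOn (fun x : ℝ ↦ ((x ^ r : ℝ) : ℂ)) (Ioi 0) :=
    Complex.continuous_ofReal.comp_continuousOn
      (continuousOn_id.rpow_const fun _ hx ↦ .inl (ne_of_gt hx))
  exact (continuousOn_const.mul (hrpow (-γ))).cexp.mul (hrpow q)

theorem eqOn_rpow_smul_rpowPhase_mul_rpow (γ : ℝ) {p q r : ℝ} (hpq : p + q = r) :
    EqOn (fun x ↦ x ^ p • (rpowPhase γ x * ((x ^ q : ℝ) : ℂ)))
      (fun x ↦ rpowPhase γ x * ((x ^ r : ℝ) : ℂ)) (Ioi 0) := by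
  intro x hx
  dsimp only
  rw [← hpq, Real.rpow_add hx, Complex.ofReal_mul, Complex.real_smul, mul_left_comm]

theorem hasDerivAt_I_div_mul_rpowPhase (hγ : γ ≠ 0) {x : ℝ} (hx : 0 < x) :
    HasDerivAt (fun y ↦ Complex.I / γ * rpowPhase γ y)
      (rpowPhase γ x * ((x ^ (-γ - 1) : ℝ) : ℂ)) x := by
  have hrpow : HasDerivAt (fun y : ℝ ↦ ((y ^ (-γ) : ℝ) : ℂ)) ((-γ * x ^ (-γ - 1) : ℝ) : ℂ) x :=
    (Real.hasDerivAt_rpow_const (.inl hx.ne')).ofReal_comp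
  refine ((hrpow.const_mul Complex.I).cexp.const_mul (Complex.I / γ)).congr_deriv ?_
  have hγ' : (γ : ℂ) ≠ 0 := Complex.ofReal_ne_zero.2 hγ
  rw [rpowPhase, Complex.ofReal_mul, Complex.ofReal_neg]
  field_simp
  rw [Complex.I_sq]
  ring

theorem not_tendsto_rpowPhase_nhdsGT_zero (hγ : 0 < γ) (l : ℂ) :
    ¬Tendsto (rpowPhase γ) (𝓝[>] 0) (𝓝 l) := fun hl ↦ by
  have hsubst : Tendsto (fun t : ℝ ↦ t ^ (-γ⁻¹)) atTop (𝓝[>] 0) :=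
    tendsto_nhdsWithin_iff.2 ⟨tendsto_rpow_neg_atTop (inv_pos.2 hγ),
      (eventually_gt_atTop 0).mono fun _ ht ↦ Real.rpow_pos_of_pos ht _⟩
  refine not_tendsto_exp_I_mul_atTop l ((hl.comp hsubst).congr' ?_)
  filter_upwards [eventually_gt_atTop 0] with t ht
  rw [Function.comp_apply, rpowPhase, ← Real.rpow_mul ht.le, neg_mul_neg, inv_mul_cancel₀ hγ.ne',
    Real.rpow_one]

theorem hasDerivWithinAt_I_div_mul_rpowPhase_Ioc (hγ : γ ≠ 0) :
    ∀ x ∈ Ioc 0 b, HasDerivWithinAt (fun y ↦ Complex.I / γ * rpowPhase γ y)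
      (rpowPhase γ x * ((x ^ (-γ - 1) : ℝ) : ℂ)) (Ioc 0 b) x :=
  fun _ hx ↦ (hasDerivAt_I_div_mul_rpowPhase hγ hx.1).hasDerivWithinAt

theorem not_improperIntervalIntegrable_rpowPhase_mul_rpow_critical (hγ : 0 < γ) (hb : 0 < b) :
    ¬ImproperIntervalIntegrable (fun x ↦ rpowPhase γ x * ((x ^ (-γ - 1) : ℝ) : ℂ)) 0 b := by
  rw [improperIntervalIntegrable_iff_exists_tendsto hb
    (hasDerivWithinAt_I_div_mul_rpowPhase_Ioc hγ.ne')
    ((continuousOn_rpowPhase_mul_rpow γ _).mono Ioc_subset_Ioi_self)]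
  rintro ⟨l, hl⟩
  have hcoeff : Complex.I / γ ≠ 0 :=
    div_ne_zero Complex.I_ne_zero (Complex.ofReal_ne_zero.2 hγ.ne')
  refine not_tendsto_rpowPhase_nhdsGT_zero hγ _ ((hl.const_mul (Complex.I / γ)⁻¹).congr fun x ↦ ?_)
  exact inv_mul_cancel_left₀ hcoeff _

theorem improperIntervalIntegrable_rpowPhase_mul_rpow_iff (hγ : 0 < γ) (hb : 0 < b) (δ : ℝ) :
    ImproperIntervalIntegrable (fun x ↦ rpowPhase γ x * ((x ^ δ : ℝ) : ℂ)) 0 b ↔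
      0 < γ + δ + 1 := by
  have hcont (q : ℝ) : ContinuousOn (fun x : ℝ ↦ rpowPhase γ x * ((x ^ q : ℝ) : ℂ)) (Ioc 0 b) :=
    (continuousOn_rpowPhase_mul_rpow γ q).mono Ioc_subset_Ioi_self
  constructor
  · intro hδ
    by_contra! hle
    have hcrit := hδ.rpow_smul (p := -(γ + δ + 1)) hb (hcont δ) (by linarith)
    have heq := eqOn_rpow_smul_rpowPhase_mul_rpow γ
      (show -(γ + δ + 1) + δ = -γ - 1 by ring)
    exact not_improperIntervalIntegrable_rpowPhase_mul_rpow_critical hγ hb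
      (hcrit.congr hb (heq.mono Ioc_subset_Ioi_self))
  · intro hpos
    have hbound (x : ℝ) : ‖Complex.I / γ * rpowPhase γ x‖ ≤ ‖Complex.I / γ‖ := by
      rw [norm_mul, norm_rpowPhase, mul_one]
    have hconv := ImproperIntervalIntegrable.rpow_smul_of_bounded_primitive hb
      (hasDerivWithinAt_I_div_mul_rpowPhase_Ioc hγ.ne') (hcont _) (fun x _ ↦ hbound x) hpos
    have heq := eqOn_rpow_smul_rpowPhase_mul_rpow γ
      (show γ + δ + 1 + (-γ - 1) = δ by ring)
    exact hconv.congr hb (heq.mono Ioc_subset_Ioi_self)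

theorem integrableOn_rpowPhase_mul_rpow_iff (γ : ℝ) (hb : 0 < b) (δ : ℝ) :
    IntegrableOn (fun x ↦ rpowPhase γ x * ((x ^ δ : ℝ) : ℂ)) (Ioo 0 b) ↔ -1 < δ := by
  have hmeas : AEStronglyMeasurable (fun x ↦ rpowPhase γ x * ((x ^ δ : ℝ) : ℂ))
      (volume.restrict (Ioo 0 b)) :=
    ((continuousOn_rpowPhase_mul_rpow γ δ).mono Ioo_subset_Ioi_self).aestronglyMeasurable
      measurableSet_Ioo
  have hnorm : EqOn (fun x ↦ ‖rpowPhase γ x * ((x ^ δ : ℝ) : ℂ)‖) (fun x ↦ x ^ δ) (Ioo 0 b) :=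
    fun x hx ↦ by
      dsimp only
      rw [norm_mul, norm_rpowPhase, one_mul, Complex.norm_real,
        Real.norm_of_nonneg (Real.rpow_nonneg hx.1.le δ)]
  rw [IntegrableOn, ← integrable_norm_iff hmeas, ← IntegrableOn,
    integrableOn_congr_fun hnorm measurableSet_Ioo, intervalIntegral.integrableOn_Ioo_rpow_iff hb]

end RpowPhase

/-- Lemma 1(a): for `γ > 0` and `δ ∈ ℝ`, the improper integral
`∫₀¹ e^{i x^{-γ}} x^{δ} dx` exists iff `γ + δ + 1 > 0`, and the integrand is
Lebesgue integrable on `(0,1)` iff `δ > -1`. -/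
theorem stmt0 (γ δ : ℝ) (hγ : 0 < γ) :
    ((∃ L : ℂ, Tendsto
        (fun ε : ℝ => ∫ x in ε..1,
          Complex.exp (Complex.I * ((x ^ (-γ) : ℝ) : ℂ)) * ((x ^ δ : ℝ) : ℂ))
        (nhdsWithin 0 (Set.Ioi 0)) (nhds L)) ↔ γ + δ + 1 > 0) ∧
    (IntegrableOn
        (fun x : ℝ => Complex.exp (Complex.I * ((x ^ (-γ) : ℝ) : ℂ)) * ((x ^ δ : ℝ) : ℂ))
        (Set.Ioo 0 1) ↔ δ > -1) :=
  ⟨improperIntervalIntegrable_rpowPhase_mul_rpow_iff hγ one_pos δ,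
    integrableOn_rpowPhase_mul_rpow_iff γ one_pos δ⟩
end

section
/- Let γ > 0 and δ ∈ ℝ. Then: (i) the improper integral ∫₁^∞ e^{i x^{γ}} x^{δ} dx exists, i.e. the limit of ∫₁^T e^{i x^{γ}} x^{δ} dx as T → ∞ exists in ℂ, if and only if γ > δ + 1; and (ii) the function x ↦ e^{i x^{γ}} x^{δ} is Lebesgue integrable on (1,∞) if and only if δ < -1. -/
open MeasureTheory Filter

/-! The substitution `u = x ^ γ` turns the integral into a constant multiple of
`∫ u ^ s e^{iu} du` with `s = (δ + 1) / γ - 1`, so that `γ > δ + 1` becomes `s < 0`.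
For `s < 0` the factor `u ^ s` has an integrable derivative and tends to `0`, and integration by
parts against the bounded primitive of `e^{iu}` gives convergence. For `s ≥ 0` the factor is at
least `1` on `[1, ∞)`, so every half period `[2πk, 2πk + π]` in that range contributes at least
`∫ sin = 2` to the imaginary part, against Cauchy's criterion. Absolute convergence only sees the
modulus `x ^ δ`.
-/

open scoped Topology

section ImproperIntegral

variable {E : Type*} [NormedAddCommGroup E] [NormedSpace ℝ E]

/-- Convergence of the improper integral `∫ₐ^∞ f` as a limit of the integrals `∫ₐ^T f`, which need
not be absolute. The interval integrals are Bochner integrals, equal to `0` where `f` is not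
integrable, so the notion is meant for `f` integrable on every `[a, T]`. -/
def ImproperIntegralConverges (f : ℝ → E) (a : ℝ) : Prop :=
  ∃ L : E, Tendsto (fun T : ℝ => ∫ x in a..T, f x) atTop (𝓝 L)

theorem ImproperIntegralConverges.tendsto_intervalIntegral_zero {f : ℝ → E} {a : ℝ}
    (hf : ImproperIntegralConverges f a)
    (hint : ∀ T, a ≤ T → IntervalIntegrable f volume a T)
    {ι : Type*} {l : Filter ι} {u v : ι → ℝ} (hu : Tendsto u l atTop) (hv : Tendsto v l atTop) :
    Tendsto (fun i => ∫ x in u i..v i, f x) l (𝓝 0) := by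
  obtain ⟨L, hL⟩ := hf
  have hdiff := (hL.comp hv).sub (hL.comp hu)
  rw [sub_self] at hdiff
  refine hdiff.congr' ?_
  filter_upwards [hu.eventually_ge_atTop a, hv.eventually_ge_atTop a] with i hui hvi
  exact intervalIntegral.integral_interval_sub_left (hint _ hvi) (hint _ hui)

theorem tendsto_intervalIntegral_smul_of_bounded_primitive [CompleteSpace E]
    {g g' : ℝ → ℝ} {F F' : ℝ → E} {a C : ℝ}
    (hg : ∀ x, a ≤ x → HasDerivAt g (g' x) x) (hF : ∀ x, a ≤ x → HasDerivAt F (F' x) x)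
    (hF' : ∀ T, a ≤ T → IntervalIntegrable F' volume a T)
    (hg' : IntegrableOn g' (Set.Ioi a)) (hg0 : Tendsto g atTop (𝓝 0))
    (hFC : ∀ x, a ≤ x → ‖F x‖ ≤ C) :
    Tendsto (fun T => ∫ x in a..T, g x • F' x) atTop
      (𝓝 (-(g a • F a) - ∫ x in Set.Ioi a, g' x • F x)) := by
  have hparts : ∀ T, a ≤ T → ∫ x in a..T, g x • F' x =
      g T • F T - g a • F a - ∫ x in a..T, g' x • F x := by
    intro T hT
    refine intervalIntegral.integral_smul_deriv_eq_deriv_smul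
      (fun x hx => hg x ?_) (fun x hx => hF x ?_)
      ((intervalIntegrable_iff_integrableOn_Ioc_of_le hT).2
        (hg'.mono_set Set.Ioc_subset_Ioi_self)) (hF' T hT) <;>
    exact (Set.uIcc_of_le hT ▸ hx).1
  have hboundary : Tendsto (fun T => g T • F T) atTop (𝓝 0) :=
    hg0.zero_smul_isBoundedUnder_le
      (isBoundedUnder_of_eventually_le ((eventually_ge_atTop a).mono hFC))
  have hFcont : ContinuousOn F (Set.Ioi a) := fun x hx =>
    (hF x (Set.mem_Ioi.1 hx).le).continuousAt.continuousWithinAt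
  have hintegrable : IntegrableOn (fun x => g' x • F x) (Set.Ioi a) :=
    Integrable.smul_bdd hg' C (hFcont.aestronglyMeasurable measurableSet_Ioi)
      (ae_restrict_of_forall_mem measurableSet_Ioi fun x hx => hFC x (Set.mem_Ioi.1 hx).le)
  have hlim := (hboundary.sub_const (g a • F a)).sub
    (intervalIntegral_tendsto_integral_Ioi a hintegrable tendsto_id)
  rw [zero_sub] at hlim
  refine hlim.congr' ?_
  filter_upwards [eventually_ge_atTop a] with T hT
  exact (hparts T hT).symm

end ImproperIntegral

section PowerSubstitution

variable {E : Type*} [NormedAddCommGroup E] [NormedSpace ℝ E]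

theorem intervalIntegral_rpow_smul_comp_rpow (f : ℝ → E) {γ : ℝ} (hγ : γ ≠ 0) (δ : ℝ) {a b : ℝ}
    (ha : 0 < a) (hb : 0 < b) :
    ∫ x in a..b, x ^ δ • f (x ^ γ) =
      γ⁻¹ • ∫ u in a ^ γ..b ^ γ, u ^ ((δ + 1) / γ - 1) • f u := by
  have hpos : ∀ x ∈ Set.uIcc a b, 0 < x := fun x hx => (lt_min ha hb).trans_le hx.1
  have hderiv : ∀ x ∈ Set.uIcc a b, HasDerivAt (fun x : ℝ => x ^ γ) (γ * x ^ (γ - 1)) x :=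
    fun x hx => Real.hasDerivAt_rpow_const (Or.inl (hpos x hx).ne')
  have hcont : ContinuousOn (fun x : ℝ => x ^ γ) (Set.uIcc a b) := fun x hx =>
    (hderiv x hx).continuousAt.continuousWithinAt
  have hpow : ∀ x ∈ Set.uIcc a b, 0 < x ^ (γ - 1) := fun x hx =>
    Real.rpow_pos_of_pos (hpos x hx) _
  have hsubst : ∫ x in a..b, (γ * x ^ (γ - 1)) • ((x ^ γ) ^ ((δ + 1) / γ - 1) • f (x ^ γ)) =
      ∫ u in a ^ γ..b ^ γ, u ^ ((δ + 1) / γ - 1) • f u := by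
    rcases hγ.lt_or_gt with hγneg | hγpos
    · exact intervalIntegral.integral_deriv_smul_comp_of_deriv_nonpos
        (g := fun u => u ^ ((δ + 1) / γ - 1) • f u) hcont
        (fun x hx => hderiv x (Set.Ioo_subset_Icc_self hx))
        (fun x hx => mul_nonpos_of_nonpos_of_nonneg hγneg.le
          (hpow x (Set.Ioo_subset_Icc_self hx)).le)
    · exact intervalIntegral.integral_deriv_smul_comp_of_deriv_nonneg
        (g := fun u => u ^ ((δ + 1) / γ - 1) • f u) hcont
        (fun x hx => hderiv x (Set.Ioo_subset_Icc_self hx))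
        (fun x hx => mul_nonneg hγpos.le (hpow x (Set.Ioo_subset_Icc_self hx)).le)
  rw [← hsubst, ← intervalIntegral.integral_smul]
  refine intervalIntegral.integral_congr fun x hx => ?_
  have hexponent : x ^ δ = x ^ (γ - 1) * (x ^ γ) ^ ((δ + 1) / γ - 1) := by
    rw [← Real.rpow_mul (hpos x hx).le, ← Real.rpow_add (hpos x hx)]
    congr 1
    field_simp
    ring
  simp only [smul_smul]
  rw [hexponent, mul_assoc, inv_mul_cancel_left₀ hγ]

theorem tendsto_comp_rpow_atTop_iff {α : Type*} {f : ℝ → α} {l : Filter α} {γ : ℝ} (hγ : 0 < γ) :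
    Tendsto (fun x => f (x ^ γ)) atTop l ↔ Tendsto f atTop l := by
  refine ⟨fun h => ?_, fun h => h.comp (tendsto_rpow_atTop hγ)⟩
  refine (h.comp (tendsto_rpow_atTop (inv_pos.2 hγ))).congr' ?_
  filter_upwards [eventually_ge_atTop 0] with x hx
  simp only [Function.comp_apply, Real.rpow_inv_rpow hx hγ.ne']

theorem improperIntegralConverges_rpow_smul_comp_rpow_iff (f : ℝ → E) {γ : ℝ} (hγ : 0 < γ) (δ : ℝ)
    {a : ℝ} (ha : 0 < a) :
    ImproperIntegralConverges (fun x => x ^ δ • f (x ^ γ)) a ↔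
      ImproperIntegralConverges (fun u => u ^ ((δ + 1) / γ - 1) • f u) (a ^ γ) := by
  have hsubst : ∀ L : E, Tendsto (fun T => ∫ x in a..T, x ^ δ • f (x ^ γ)) atTop (𝓝 (γ⁻¹ • L)) ↔
      Tendsto (fun T => ∫ u in a ^ γ..T, u ^ ((δ + 1) / γ - 1) • f u) atTop (𝓝 L) := by
    intro L
    rw [← tendsto_comp_rpow_atTop_iff (l := 𝓝 L) hγ,
      ← tendsto_const_smul_iff₀ (a := L) (inv_ne_zero hγ.ne')]
    refine tendsto_congr' ?_
    filter_upwards [eventually_gt_atTop 0] with T hT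
    exact intervalIntegral_rpow_smul_comp_rpow f hγ.ne' δ ha hT
  refine ⟨fun ⟨L, hL⟩ => ⟨γ • L, (hsubst _).1 ?_⟩, fun ⟨L, hL⟩ => ⟨γ⁻¹ • L, (hsubst L).2 hL⟩⟩
  rwa [inv_smul_smul₀ hγ.ne']

end PowerSubstitution

theorem improperIntegralConverges_rpow_smul_exp {s a : ℝ} (hs : s < 0) (ha : 0 < a) :
    ImproperIntegralConverges (fun u : ℝ => u ^ s • Complex.exp (Complex.I * u)) a := by
  have hprimitive : ∀ u : ℝ, HasDerivAt (fun u : ℝ => -Complex.I * Complex.exp (Complex.I * u))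
      (Complex.exp (Complex.I * u)) u := by
    intro u
    refine HasDerivAt.congr_deriv
      (((Complex.ofRealCLM.hasDerivAt.const_mul Complex.I).cexp).const_mul (-Complex.I)) ?_
    simp only [Complex.ofRealCLM_apply, Complex.ofReal_one]
    linear_combination (-Complex.exp (Complex.I * u)) * Complex.I_mul_I
  have hpow : Tendsto (fun u : ℝ => u ^ s) atTop (𝓝 0) := by
    simpa only [neg_neg] using tendsto_rpow_neg_atTop (neg_pos.2 hs)
  have hbound : ∀ u : ℝ, ‖-Complex.I * Complex.exp (Complex.I * u)‖ ≤ 1 := fun u => by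
    rw [norm_mul, norm_neg, Complex.norm_I, Complex.norm_exp_I_mul_ofReal, one_mul]
  exact ⟨_, tendsto_intervalIntegral_smul_of_bounded_primitive
    (fun u hu => Real.hasDerivAt_rpow_const (Or.inl (ha.trans_le hu).ne'))
    (fun u _ => hprimitive u)
    (fun T _ => Continuous.intervalIntegrable (by fun_prop) a T)
    (((integrableOn_Ioi_rpow_iff ha).2 (by linarith)).const_mul s) hpow fun u _ => hbound u⟩

theorem two_mul_le_norm_integral_smul_exp {g : ℝ → ℝ} {c : ℝ} (k : ℤ)
    (hint : IntervalIntegrable g volume (k * (2 * Real.pi)) (k * (2 * Real.pi) + Real.pi))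
    (hg : ∀ u ∈ Set.Icc (k * (2 * Real.pi)) (k * (2 * Real.pi) + Real.pi), c ≤ g u) :
    2 * c ≤ ‖∫ u in (k * (2 * Real.pi))..(k * (2 * Real.pi) + Real.pi),
      g u • Complex.exp (Complex.I * u)‖ := by
  set A : ℝ := k * (2 * Real.pi) with hA
  have him : (∫ u in A..A + Real.pi, g u • Complex.exp (Complex.I * u)).im =
      ∫ u in A..A + Real.pi, g u * Real.sin u := by
    have hcomm := Complex.imCLM.intervalIntegral_comp_comm
      (hint.smul_continuousOn (f := g) (g := fun u : ℝ => Complex.exp (Complex.I * u))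
        (by fun_prop))
    simpa only [Complex.imCLM_apply, Complex.smul_im, smul_eq_mul, mul_comm Complex.I,
      Complex.exp_ofReal_mul_I_im] using hcomm.symm
  have hsin : ∀ u ∈ Set.Icc A (A + Real.pi), 0 ≤ Real.sin u := by
    intro u hu
    rw [← Real.sin_sub_int_mul_two_pi u k]
    exact Real.sin_nonneg_of_nonneg_of_le_pi (by linarith [hu.1]) (by linarith [hu.2])
  calc 2 * c = ∫ u in A..A + Real.pi, c * Real.sin u := by
        rw [intervalIntegral.integral_const_mul, integral_sin, Real.cos_add_pi, hA,
          Real.cos_int_mul_two_pi]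
        ring
    _ ≤ ∫ u in A..A + Real.pi, g u * Real.sin u :=
        intervalIntegral.integral_mono_on (by linarith [Real.pi_pos])
          (Continuous.intervalIntegrable (by fun_prop) _ _)
          (hint.mul_continuousOn Real.continuous_sin.continuousOn)
          fun u hu => mul_le_mul_of_nonneg_right (hg u hu) (hsin u hu)
    _ = (∫ u in A..A + Real.pi, g u • Complex.exp (Complex.I * u)).im := him.symm
    _ ≤ _ := (le_abs_self _).trans (Complex.abs_im_le_norm _)

theorem not_improperIntegralConverges_smul_exp_of_eventually_ge {g : ℝ → ℝ} {a c : ℝ} (hc : 0 < c)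
    (hint : ∀ T, a ≤ T → IntervalIntegrable g volume a T) (hg : ∀ᶠ u in atTop, c ≤ g u) :
    ¬ ImproperIntegralConverges (fun u : ℝ => g u • Complex.exp (Complex.I * u)) a := by
  intro hconv
  have hleft : Tendsto (fun k : ℤ => (k : ℝ) * (2 * Real.pi)) atTop atTop :=
    tendsto_intCast_atTop_atTop.atTop_mul_const Real.two_pi_pos
  have hright := tendsto_atTop_add_const_right atTop Real.pi hleft
  have hzero := (hconv.tendsto_intervalIntegral_zero
    (fun T hT => (hint T hT).smul_continuousOn (by fun_prop)) hleft hright).norm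
  rw [norm_zero] at hzero
  obtain ⟨k, hsmall, hak, hgk⟩ := ((hzero.eventually_lt_const (mul_pos two_pos hc)).and
    ((hleft.eventually_ge_atTop a).and (hleft.eventually_forall_ge_atTop hg))).exists
  exact hsmall.not_ge <| two_mul_le_norm_integral_smul_exp k
    ((hint _ hak).symm.trans (hint _ (by linarith [Real.pi_pos]))) fun u hu => hgk u hu.1

theorem improperIntegralConverges_rpow_smul_exp_iff {s a : ℝ} (ha : 0 < a) :
    ImproperIntegralConverges (fun u : ℝ => u ^ s • Complex.exp (Complex.I * u)) a ↔ s < 0 := by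
  refine ⟨fun hconv => ?_, fun hs => improperIntegralConverges_rpow_smul_exp hs ha⟩
  by_contra! hs
  refine not_improperIntegralConverges_smul_exp_of_eventually_ge one_pos
    (fun T _ => intervalIntegral.intervalIntegrable_rpow (Or.inl hs)) ?_ hconv
  filter_upwards [eventually_ge_atTop 1] with u hu
  exact Real.one_le_rpow hu hs

theorem integrable_smul_iff_of_norm_eq_one {α 𝕜 E : Type*} [MeasurableSpace α] {μ : Measure α}
    [NormedField 𝕜] [NormedAddCommGroup E] [NormedSpace 𝕜 E] {g : α → 𝕜} {φ : α → E}
    (hg : AEStronglyMeasurable g μ) (hφ : AEStronglyMeasurable φ μ) (hφ1 : ∀ᵐ x ∂μ, ‖φ x‖ = 1) :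
    Integrable (fun x => g x • φ x) μ ↔ Integrable g μ := by
  refine integrable_congr' (hg.smul hφ) hg ?_
  filter_upwards [hφ1] with x hx
  rw [norm_smul, hx, mul_one]

/-- Lemma 1(b): for `γ > 0` and `δ ∈ ℝ`, the improper integral
`∫₁^∞ e^{i x^{γ}} x^{δ} dx` exists iff `γ > δ + 1`, and the integrand is
Lebesgue integrable on `(1,∞)` iff `δ < -1`. -/
theorem stmt1 (γ δ : ℝ) (hγ : 0 < γ) :
    ((∃ L : ℂ, Tendsto
        (fun T : ℝ => ∫ x in (1:ℝ)..T,
          Complex.exp (Complex.I * ((x ^ γ : ℝ) : ℂ)) * ((x ^ δ : ℝ) : ℂ))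
        atTop (nhds L)) ↔ γ > δ + 1) ∧
    (IntegrableOn
        (fun x : ℝ => Complex.exp (Complex.I * ((x ^ γ : ℝ) : ℂ)) * ((x ^ δ : ℝ) : ℂ))
        (Set.Ioi 1) ↔ δ < -1) := by
  simp only [mul_comm (Complex.exp _), ← Complex.real_smul]
  constructor
  · calc ImproperIntegralConverges (fun x : ℝ => x ^ δ • Complex.exp (Complex.I * (x ^ γ : ℝ))) 1
      _ ↔ (δ + 1) / γ - 1 < 0 :=
        (improperIntegralConverges_rpow_smul_comp_rpow_iff
          (fun u : ℝ => Complex.exp (Complex.I * u)) hγ δ one_pos).trans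
          (improperIntegralConverges_rpow_smul_exp_iff (Real.rpow_pos_of_pos one_pos γ))
      _ ↔ γ > δ + 1 := by rw [sub_neg, div_lt_one hγ]
  · exact (integrable_smul_iff_of_norm_eq_one
      (Measurable.aestronglyMeasurable (by fun_prop))
      (Measurable.aestronglyMeasurable (by fun_prop))
      (ae_of_all _ fun x => Complex.norm_exp_I_mul_ofReal _)).trans
      (integrableOn_Ioi_rpow_iff one_pos)
end

section
/- Let f : ℝ → ℂ be locally integrable and suppose there exists a ≥ 0 such that f has bounded variation on [a,∞) and on (-∞,-a] (real and imaginary parts each of bounded variation) and f(x) → 0 as x → ∞ and as x → -∞. Then for every s ≠ 0 the Fourier transform f̂(s) exists, i.e. ∫_{-T₁}^{T₂} e^{-isx} f(x) dx converges to a finite limit as T₁ → ∞ and T₂ → ∞ independently. -/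
open MeasureTheory Filter

/-- The Fourier transform of `f` exists at `s` with value `L`:
`∫_{-T₁}^{T₂} e^{-isx} f(x) dx → L` as `T₁ → ∞` and `T₂ → ∞` independently. -/
def HasFourierHK (f : ℝ → ℂ) (s : ℝ) (L : ℂ) : Prop :=
  Tendsto (fun T : ℝ × ℝ =>
      ∫ x in (-T.1)..T.2, Complex.exp (-(Complex.I * (s : ℂ) * (x : ℂ))) * f x)
    (atTop ×ˢ atTop) (nhds L)

/-!
The kernel `e x = exp (-isx)` is antiperiodic: `e (x + h) = -e x` for `h = ±π / s`. Hence
`e x • f x + e (x + h) • f (x + h) = -e x • (f (x + h) - f x)`, and a function of bounded variation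
satisfies `∫ ‖f (x + h) - f x‖ ≤ |h| * V f`, so this sum is absolutely integrable near infinity.
Up to boundary terms over intervals of length `h`, which converge because `f → 0`, its integral is
twice the integral of `e • f`.
-/

open Set Topology

section BoundedVariation

theorem boundedVariationOn_of_re_im {α : Type*} [LinearOrder α] {f : α → ℂ} {S : Set α}
    (hre : BoundedVariationOn (fun x => (f x).re) S)
    (him : BoundedVariationOn (fun x => (f x).im) S) : BoundedVariationOn f S := by
  have edist_le (z w : ℂ) : edist z w ≤ edist z.re w.re + edist z.im w.im := by
    simp only [edist_dist, ← ENNReal.ofReal_add dist_nonneg dist_nonneg]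
    refine ENNReal.ofReal_le_ofReal ?_
    simpa only [dist_eq_norm, Complex.sub_re, Complex.sub_im, Real.norm_eq_abs] using
      Complex.norm_le_abs_re_add_abs_im (z - w)
  refine ne_top_of_le_ne_top (ENNReal.add_ne_top.2 ⟨hre, him⟩) (iSup_le fun ⟨n, u, hu, huS⟩ => ?_)
  calc ∑ i ∈ Finset.range n, edist (f (u (i + 1))) (f (u i))
    _ ≤ ∑ i ∈ Finset.range n, (edist (f (u (i + 1))).re (f (u i)).re +
          edist (f (u (i + 1))).im (f (u i)).im) := Finset.sum_le_sum fun _ _ => edist_le _ _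
    _ ≤ _ := Finset.sum_add_distrib.trans_le
          (add_le_add (eVariationOn.sum_le hu huS) (eVariationOn.sum_le hu huS))

theorem dist_le_variationOnFromTo_sub {α E : Type*} [LinearOrder α] [PseudoMetricSpace E]
    {f : α → E} {S : Set α} (hf : LocallyBoundedVariationOn f S) {a x y : α}
    (ha : a ∈ S) (hx : x ∈ S) (hy : y ∈ S) (hxy : x ≤ y) :
    dist (f x) (f y) ≤ variationOnFromTo f S a y - variationOnFromTo f S a x := by
  rw [variationOnFromTo.sub_right hf ha hy hx, variationOnFromTo.eq_of_le f S hxy, dist_edist]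
  exact ENNReal.toReal_mono (hf x y hx hy)
    (eVariationOn.edist_le f ⟨hx, left_mem_Icc.2 hxy⟩ ⟨hy, right_mem_Icc.2 hxy⟩)

theorem intervalIntegrable_of_monotoneOn_Ici {v : ℝ → ℝ} {a x y : ℝ}
    (hv : MonotoneOn v (Ici a)) (hx : a ≤ x) (hy : a ≤ y) : IntervalIntegrable v volume x y :=
  (hv.mono fun _ hz => (le_min hx hy).trans hz.1).intervalIntegrable

theorem integral_comp_add_right_sub_le_of_monotoneOn {v : ℝ → ℝ} {a h B T : ℝ}
    (hv : MonotoneOn v (Ici a)) (hB : ∀ x ∈ Ici a, v x ≤ B) (hh : 0 ≤ h) (hT : a ≤ T) :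
    ∫ x in a..T, (v (x + h) - v x) ≤ h * (B - v a) := by
  have hvi {x y : ℝ} (hx : a ≤ x) (hy : a ≤ y) : IntervalIntegrable v volume x y :=
    intervalIntegrable_of_monotoneOn_Ici hv hx hy
  have hah : a ≤ a + h := le_add_of_nonneg_right hh
  have hTh : T ≤ T + h := le_add_of_nonneg_right hh
  have upper : ∫ x in T..T + h, v x ≤ h * B := by
    simpa using intervalIntegral.integral_mono_on hTh (hvi hT (hT.trans hTh))
      intervalIntegrable_const fun x hx => hB x (hT.trans hx.1)
  have lower : h * v a ≤ ∫ x in a..a + h, v x := by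
    simpa using intervalIntegral.integral_mono_on hah intervalIntegrable_const (hvi le_rfl hah)
      fun x hx => hv self_mem_Ici hx.1 hx.1
  calc ∫ x in a..T, (v (x + h) - v x)
    _ = (∫ x in a + h..T + h, v x) - ∫ x in a..T, v x := by
        rw [intervalIntegral.integral_sub
          ((IntervalIntegrable.comp_add_right_iff (by simp)).2 (hvi hah (hT.trans hTh)))
          (hvi le_rfl hT), intervalIntegral.integral_comp_add_right]
    _ = (∫ x in T..T + h, v x) - ∫ x in a..a + h, v x :=
        intervalIntegral.integral_interval_sub_interval_comm' (hvi hah (hT.trans hTh))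
          (hvi le_rfl hT) (hvi hah le_rfl)
    _ ≤ h * (B - v a) := by linarith

theorem integrableOn_Ioi_comp_add_right_sub {E : Type*} [NormedAddCommGroup E] {f : ℝ → E}
    {a h : ℝ} (hf : ∀ x y, IntervalIntegrable f volume x y)
    (hbv : BoundedVariationOn f (Ici a)) (hh : 0 ≤ h) :
    IntegrableOn (fun x => f (x + h) - f x) (Ioi a) := by
  set v := variationOnFromTo f (Ici a) a
  have hlbv := hbv.locallyBoundedVariationOn
  have hv : MonotoneOn v (Ici a) := variationOnFromTo.monotoneOn hlbv self_mem_Ici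
  have hvB (x : ℝ) (_ : x ∈ Ici a) : v x ≤ (eVariationOn f (Ici a)).toReal :=
    (le_abs_self _).trans (variationOnFromTo.abs_le_eVariationOn hbv)
  have hdiff (x y : ℝ) : IntervalIntegrable (fun x => f (x + h) - f x) volume x y :=
    ((IntervalIntegrable.comp_add_right_iff (by simp)).2 (hf _ _)).sub (hf x y)
  refine integrableOn_Ioi_of_intervalIntegral_norm_bounded (b := id)
    (h * ((eVariationOn f (Ici a)).toReal - v a)) a (fun T => (hdiff a T).1)
    tendsto_id ((eventually_ge_atTop a).mono fun T hT => ?_)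
  have hvi : IntervalIntegrable v volume a T := intervalIntegrable_of_monotoneOn_Ici hv le_rfl hT
  have hvi_shift : IntervalIntegrable (fun x => v (x + h)) volume a T :=
    (IntervalIntegrable.comp_add_right_iff (by simp)).2
      (intervalIntegrable_of_monotoneOn_Ici hv (by linarith) (by linarith))
  calc ∫ x in a..T, ‖f (x + h) - f x‖
    _ ≤ ∫ x in a..T, (v (x + h) - v x) := by
        refine intervalIntegral.integral_mono_on hT (hdiff a T).norm
          (hvi_shift.sub hvi) fun x hx => ?_
        rw [← dist_eq_norm, dist_comm]
        have hxh : x ≤ x + h := le_add_of_nonneg_right hh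
        exact dist_le_variationOnFromTo_sub hlbv self_mem_Ici hx.1 (hx.1.trans hxh) hxh
    _ ≤ _ := integral_comp_add_right_sub_le_of_monotoneOn hv hvB hh hT

end BoundedVariation

section ImproperIntegral

variable {E : Type*} [NormedAddCommGroup E] [NormedSpace ℝ E] {F : ℝ → E}

theorem tendsto_integral_add_right_of_tendsto_zero (hlim : Tendsto F atTop (𝓝 0)) (h : ℝ) :
    Tendsto (fun T => ∫ x in T..T + h, F x) atTop (𝓝 0) := by
  refine Metric.tendsto_nhds.2 fun ε hε => ?_
  obtain ⟨N, hN⟩ := eventually_atTop.1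
    (Metric.tendsto_nhds.1 hlim (ε / (|h| + 1)) (by positivity))
  filter_upwards [eventually_ge_atTop (N + |h|)] with T hT
  have hF (x : ℝ) (hx : x ∈ uIoc T (T + h)) : ‖F x‖ ≤ ε / (|h| + 1) := by
    have hTx : T - |h| ≤ x := (le_min (by linarith [abs_nonneg h])
      (by linarith [neg_abs_le h])).trans hx.1.le
    simpa using (hN x (by linarith)).le
  calc dist (∫ x in T..T + h, F x) 0
    _ ≤ ε / (|h| + 1) * |h| := by simpa using intervalIntegral.norm_integral_le_of_norm_le_const hF
    _ < ε := by
        rw [div_mul_eq_mul_div, div_lt_iff₀ (by positivity)]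
        exact mul_lt_mul_of_pos_left (lt_add_one _) hε

theorem exists_tendsto_integral_of_integrableOn_add_comp_add_right {a h : ℝ}
    (hF : ∀ x y, IntervalIntegrable F volume x y) (hlim : Tendsto F atTop (𝓝 0))
    (hint : IntegrableOn (fun x => F x + F (x + h)) (Ioi a)) (b : ℝ) :
    ∃ L, Tendsto (fun T => ∫ x in b..T, F x) atTop (𝓝 L) := by
  have hsum (T : ℝ) : ∫ x in b..T, F x = (∫ x in b..a, F x) + (2⁻¹ : ℝ) •
      ((∫ x in a..T, (F x + F (x + h))) + (∫ x in a..a + h, F x) - ∫ x in T..T + h, F x) := by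
    rw [intervalIntegral.integral_add (hF a T)
        ((IntervalIntegrable.comp_add_right_iff (by simp)).2 (hF _ _)),
      intervalIntegral.integral_comp_add_right,
      ← intervalIntegral.integral_add_adjacent_intervals (hF b a) (hF a T),
      ← intervalIntegral.integral_add_adjacent_intervals (hF (a + h) T) (hF T (T + h)),
      ← intervalIntegral.integral_interval_sub_left (hF a T) (hF a (a + h))]
    module
  exact ⟨_, (((((intervalIntegral_tendsto_integral_Ioi a hint tendsto_id).add_const _).sub
    (tendsto_integral_add_right_of_tendsto_zero hlim h)).const_smul _).const_add _).congr
      fun T => (hsum T).symm⟩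

theorem tendsto_integral_neg_prod_atTop {L₁ L₂ : E}
    (hF : ∀ x y, IntervalIntegrable F volume x y)
    (hL₁ : Tendsto (fun T => ∫ x in (0 : ℝ)..T, F (-x)) atTop (𝓝 L₁))
    (hL₂ : Tendsto (fun T => ∫ x in (0 : ℝ)..T, F x) atTop (𝓝 L₂)) :
    Tendsto (fun T : ℝ × ℝ => ∫ x in (-T.1)..T.2, F x) (atTop ×ˢ atTop) (𝓝 (L₁ + L₂)) := by
  refine ((hL₁.comp tendsto_fst).add (hL₂.comp tendsto_snd)).congr fun T => ?_
  simp only [Function.comp_apply, intervalIntegral.integral_comp_neg, neg_zero]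
  exact intervalIntegral.integral_add_adjacent_intervals (hF _ _) (hF _ _)

end ImproperIntegral

section AntiperiodicKernel

variable {𝕜 E : Type*} [NormedRing 𝕜] [NormedAddCommGroup E] [NormedSpace ℝ E] [Module 𝕜 E]
  [IsBoundedSMul 𝕜 E] {e : ℝ → 𝕜} {f : ℝ → E} {a h : ℝ}

theorem exists_tendsto_integral_antiperiodic_smul (he : Continuous e)
    (hanti : Function.Antiperiodic e h) (hh : h ≠ 0)
    (hf : ∀ x y, IntervalIntegrable f volume x y) (hbv : BoundedVariationOn f (Ici a))
    (hlim : Tendsto f atTop (𝓝 0)) (b : ℝ) :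
    ∃ L, Tendsto (fun T => ∫ x in b..T, e x • f x) atTop (𝓝 L) := by
  wlog hpos : 0 < h generalizing h
  · exact this hanti.neg (neg_ne_zero.2 hh) (neg_pos.2 (hh.lt_of_le (not_lt.1 hpos)))
  obtain ⟨C, hC⟩ : ∃ C, ∀ x, ‖e x‖ ≤ C := by
    obtain ⟨C, hC⟩ := (hanti.periodic_two_mul.isBounded_of_continuous
      (mul_ne_zero two_ne_zero hh) he).exists_norm_le
    exact ⟨C, fun x => hC _ (mem_range_self x)⟩
  refine exists_tendsto_integral_of_integrableOn_add_comp_add_right (a := a) (h := h)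
    (fun x y => (hf x y).continuousOn_smul he.continuousOn) ?_ ?_ b
  · refine squeeze_zero_norm (fun x => (norm_smul_le _ _).trans
      (mul_le_mul_of_nonneg_right (hC x) (norm_nonneg _))) ?_
    simpa using hlim.norm.const_mul C
  · have hshift : (fun x => e x • f x + e (x + h) • f (x + h)) =
        -(e • fun x => f (x + h) - f x) := by
      ext x
      simp only [hanti x, neg_smul, Pi.neg_apply, Pi.smul_apply', smul_sub]
      abel
    rw [hshift]
    exact ((integrableOn_Ioi_comp_add_right_sub hf hbv hpos.le).bdd_smul C
      he.aestronglyMeasurable (ae_of_all _ hC)).neg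

theorem stmt3_general [CompleteSpace E] {b : ℝ} (he : Continuous e)
    (hanti : Function.Antiperiodic e h) (hh : h ≠ 0)
    (hf : ∀ x y, IntervalIntegrable f volume x y)
    (hbv_top : BoundedVariationOn f (Ici a)) (hbv_bot : BoundedVariationOn f (Iic b))
    (hlim_top : Tendsto f atTop (𝓝 0)) (hlim_bot : Tendsto f atBot (𝓝 0)) :
    ∃ L, Tendsto (fun T : ℝ × ℝ => ∫ x in (-T.1)..T.2, e x • f x) (atTop ×ˢ atTop) (𝓝 L) := by
  have hanti_neg : Function.Antiperiodic (fun x => e (-x)) h := fun x => by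
    simp only [neg_add', hanti.sub_eq]
  have hf_neg (x y : ℝ) : IntervalIntegrable (fun x => f (-x)) volume x y := by
    simpa using (IntervalIntegrable.iff_comp_neg (by simp)).1 (hf (-x) (-y))
  have hbv_neg : BoundedVariationOn (fun x => f (-x)) (Ici (-b)) :=
    ne_top_of_le_ne_top hbv_bot (eVariationOn.comp_le_of_antitoneOn f _
      (fun _ _ _ _ hxy => neg_le_neg hxy) fun _ hx => mem_Iic.2 (neg_le.1 hx))
  obtain ⟨L₁, hL₁⟩ := exists_tendsto_integral_antiperiodic_smul (he.comp continuous_neg)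
    hanti_neg hh hf_neg hbv_neg (hlim_bot.comp tendsto_neg_atTop_atBot) 0
  obtain ⟨L₂, hL₂⟩ :=
    exists_tendsto_integral_antiperiodic_smul he hanti hh hf hbv_top hlim_top 0
  exact ⟨L₁ + L₂, tendsto_integral_neg_prod_atTop
    (fun x y => (hf x y).continuousOn_smul he.continuousOn) hL₁ hL₂⟩

end AntiperiodicKernel

theorem antiperiodic_exp_neg_I_mul {s : ℝ} (hs : s ≠ 0) :
    Function.Antiperiodic (fun x : ℝ => Complex.exp (-(Complex.I * s * x))) (Real.pi / s) := by
  intro x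
  have hs' : (s : ℂ) ≠ 0 := Complex.ofReal_ne_zero.2 hs
  rw [← Complex.exp_antiperiodic.sub_eq]
  refine congrArg Complex.exp ?_
  push_cast
  field_simp
  ring

/-- Proposition 1(b) (bounded variation case): if `f` is locally integrable, of bounded
variation (real and imaginary parts) in a neighbourhood of `±∞` with limit `0` at `±∞`,
then `f̂(s)` exists for every `s ≠ 0`. -/
theorem stmt3 (f : ℝ → ℂ)
    (hloc : ∀ a b : ℝ, IntegrableOn f (Set.Icc a b))
    (hbv : ∃ a : ℝ, 0 ≤ a ∧
      BoundedVariationOn (fun x => (f x).re) (Set.Ici a) ∧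
      BoundedVariationOn (fun x => (f x).im) (Set.Ici a) ∧
      BoundedVariationOn (fun x => (f x).re) (Set.Iic (-a)) ∧
      BoundedVariationOn (fun x => (f x).im) (Set.Iic (-a)))
    (hlim₁ : Tendsto f atTop (nhds 0))
    (hlim₂ : Tendsto f atBot (nhds 0)) :
    ∀ s : ℝ, s ≠ 0 → ∃ L : ℂ, HasFourierHK f s L := by
  intro s hs
  obtain ⟨a, -, hre_top, him_top, hre_bot, him_bot⟩ := hbv
  exact stmt3_general (e := fun x : ℝ => Complex.exp (-(Complex.I * s * x)))
    (by fun_prop) (antiperiodic_exp_neg_I_mul hs)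
    (div_ne_zero Real.pi_ne_zero hs) (fun _ _ => (hloc _ _).intervalIntegrable)
    (boundedVariationOn_of_re_im hre_top him_top) (boundedVariationOn_of_re_im hre_bot him_bot)
    hlim₁ hlim₂
end

section
/- Let f : ℝ → ℂ be Lebesgue integrable on (0,∞) and define F₁(x) = ∫_x^∞ f(t) dt. Then for every s ≠ 0 the improper integral lim_{T→∞} ∫_0^T e^{-isx} F₁(x) dx exists, and i s · lim_{T→∞} ∫_0^T e^{-isx} F₁(x) dx = F₁(0) − ∫_0^∞ e^{-isx} f(x) dx. -/
open MeasureTheory Filter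

/-!
By Fubini on the triangle `{a < x ≤ b, x < t}`, integrating a function `g` against the tail
`x ↦ ∫_x^∞ f` up to `b` amounts to integrating `f` against the truncated primitive
`t ↦ ∫_a^{min b t} g`. If the primitive of `g` is bounded, dominated convergence lets `b → ∞`. For
`g x = exp (-z x)` with `0 ≤ re z` and `z ≠ 0` the primitive is `(exp (-z a) - exp (-z t)) / z`,
which is bounded and gives the identity; `z = i s` is the Fourier case.
-/

section Tail

variable {𝕜 E : Type*} [RCLike 𝕜] [NormedAddCommGroup E] [NormedSpace ℝ E] [NormedSpace 𝕜 E]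
  [CompleteSpace E] {μ ν : Measure ℝ} [SFinite μ] [NullSingletonClass μ] [SFinite ν]
  {g : ℝ → 𝕜} {f : ℝ → E} {a : ℝ}

theorem intervalIntegral_smul_integral_Ioi {b : ℝ} (hab : a ≤ b)
    (hg : IntervalIntegrable g μ a b) (hf : IntegrableOn f (Set.Ioi a) ν) :
    ∫ x in a..b, g x • ∫ t in Set.Ioi x, f t ∂ν ∂μ =
      ∫ t in Set.Ioi a, (∫ x in a..min b t, g x ∂μ) • f t ∂ν := by
  have triangle_integrable : Integrable
      (Function.uncurry fun x t => (Set.Ioi x).indicator (fun t => g x • f t) t)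
      ((μ.restrict (Set.Ioc a b)).prod (ν.restrict (Set.Ioi a))) :=
    (hg.1.smul_prod hf).indicator (measurableSet_lt measurable_fst measurable_snd)
  have inner_tail : ∀ x ∈ Set.Ioc a b,
      ∫ t in Set.Ioi a, (Set.Ioi x).indicator (fun t => g x • f t) t ∂ν =
        g x • ∫ t in Set.Ioi x, f t ∂ν := fun x hx => by
    rw [setIntegral_indicator measurableSet_Ioi,
      Set.inter_eq_right.2 (Set.Ioi_subset_Ioi hx.1.le), integral_smul]
  have inner_primitive : ∀ t ∈ Set.Ioi a,
      ∫ x in Set.Ioc a b, (Set.Ioi x).indicator (fun t => g x • f t) t ∂μ =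
        (∫ x in a..min b t, g x ∂μ) • f t := fun t ht => by
    change ∫ x in Set.Ioc a b, (Set.Iio t).indicator (fun x => g x • f t) x ∂μ = _
    rw [setIntegral_indicator measurableSet_Iio,
      setIntegral_congr_set ((ae_eq_refl _).inter Iio_ae_eq_Iic), Set.Ioc_inter_Iic,
      integral_smul_const, intervalIntegral.integral_of_le (le_min hab (le_of_lt ht))]
  calc ∫ x in a..b, g x • ∫ t in Set.Ioi x, f t ∂ν ∂μ
      = ∫ x in Set.Ioc a b,
          ∫ t in Set.Ioi a, (Set.Ioi x).indicator (fun t => g x • f t) t ∂ν ∂μ := by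
        rw [intervalIntegral.integral_of_le hab]
        exact (setIntegral_congr_fun measurableSet_Ioc inner_tail).symm
    _ = ∫ t in Set.Ioi a,
          ∫ x in Set.Ioc a b, (Set.Ioi x).indicator (fun t => g x • f t) t ∂μ ∂ν :=
        integral_integral_swap triangle_integrable
    _ = ∫ t in Set.Ioi a, (∫ x in a..min b t, g x ∂μ) • f t ∂ν :=
        setIntegral_congr_fun measurableSet_Ioi inner_primitive

theorem tendsto_intervalIntegral_smul_integral_Ioi {C : ℝ}
    (hg : ∀ b, a ≤ b → IntervalIntegrable g μ a b) (hC : ∀ b, a ≤ b → ‖∫ x in a..b, g x ∂μ‖ ≤ C)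
    (hf : IntegrableOn f (Set.Ioi a) ν) :
    Tendsto (fun b => ∫ x in a..b, g x • ∫ t in Set.Ioi x, f t ∂ν ∂μ) atTop
      (nhds (∫ t in Set.Ioi a, (∫ x in a..t, g x ∂μ) • f t ∂ν)) := by
  have primitive_continuousOn : ∀ b, a ≤ b →
      ContinuousOn (fun t => ∫ x in a..min b t, g x ∂μ) (Set.Ioi a) := fun b hb =>
    (intervalIntegral.continuousOn_primitive_interval' (hg b hb) Set.left_mem_uIcc).comp
      (by fun_prop) fun t ht => Set.mem_uIcc_of_le (le_min hb (le_of_lt ht)) (min_le_left b t)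
  have tendsto_truncated : Tendsto
      (fun b => ∫ t in Set.Ioi a, (∫ x in a..min b t, g x ∂μ) • f t ∂ν) atTop
      (nhds (∫ t in Set.Ioi a, (∫ x in a..t, g x ∂μ) • f t ∂ν)) := by
    refine tendsto_integral_filter_of_dominated_convergence (fun t => C * ‖f t‖) ?_ ?_
      (hf.norm.const_mul C) (.of_forall fun t => ?_)
    · filter_upwards [eventually_ge_atTop a] with b hb
      exact ((primitive_continuousOn b hb).aestronglyMeasurable measurableSet_Ioi).smul
        hf.aestronglyMeasurable
    · filter_upwards [eventually_ge_atTop a] with b hb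
      filter_upwards [ae_restrict_mem measurableSet_Ioi] with t ht
      rw [norm_smul]
      gcongr
      exact hC _ (le_min hb (le_of_lt ht))
    · refine tendsto_const_nhds.congr' ?_
      filter_upwards [eventually_ge_atTop t] with b hb
      rw [min_eq_right hb]
  refine tendsto_truncated.congr' ?_
  filter_upwards [eventually_ge_atTop a] with b hb
  exact (intervalIntegral_smul_integral_Ioi hb (hg b hb) hf).symm

end Tail

section Exp

variable {z : ℂ} {a x : ℝ}

theorem integral_exp_neg_mul_complex {b : ℝ} (hz : z ≠ 0) :
    ∫ x in a..b, Complex.exp (-(z * x)) =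
      (Complex.exp (-(z * a)) - Complex.exp (-(z * b))) / z := by
  have h := integral_exp_mul_complex (a := a) (b := b) (neg_ne_zero.2 hz)
  simp only [neg_mul] at h
  rw [h, div_neg, ← neg_div, neg_sub]

theorem norm_exp_neg_mul_ofReal_le (hz : 0 ≤ z.re) (hx : a ≤ x) :
    ‖Complex.exp (-(z * x))‖ ≤ Real.exp (-(z.re * a)) := by
  rw [Complex.norm_exp, Complex.neg_re, Complex.re_mul_ofReal]
  gcongr

theorem norm_integral_exp_neg_mul_le {b : ℝ} (hz : 0 ≤ z.re) (hz₀ : z ≠ 0) (hab : a ≤ b) :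
    ‖∫ x in a..b, Complex.exp (-(z * x))‖ ≤ 2 * Real.exp (-(z.re * a)) / ‖z‖ := by
  rw [integral_exp_neg_mul_complex hz₀, norm_div, two_mul]
  gcongr
  exact norm_sub_le_of_le (norm_exp_neg_mul_ofReal_le hz le_rfl)
    (norm_exp_neg_mul_ofReal_le hz hab)

variable {E : Type*} [NormedAddCommGroup E] [NormedSpace ℂ E] {f : ℝ → E} {ν : Measure ℝ}

theorem integrableOn_exp_neg_mul_smul (hz : 0 ≤ z.re)
    (hf : IntegrableOn f (Set.Ioi a) ν) :
    IntegrableOn (fun x : ℝ => Complex.exp (-(z * x)) • f x) (Set.Ioi a) ν := by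
  refine Integrable.bdd_smul hf (Real.exp (-(z.re * a)))
    (Continuous.aestronglyMeasurable (by fun_prop)) ?_
  filter_upwards [ae_restrict_mem measurableSet_Ioi] with x hx
  exact norm_exp_neg_mul_ofReal_le hz (le_of_lt hx)

theorem smul_integral_Ioi_integral_exp_neg_mul_smul (hz : 0 ≤ z.re) (hz₀ : z ≠ 0)
    (hf : IntegrableOn f (Set.Ioi a) ν) :
    z • ∫ t in Set.Ioi a, (∫ x in a..t, Complex.exp (-(z * x))) • f t ∂ν =
      Complex.exp (-(z * a)) • (∫ t in Set.Ioi a, f t ∂ν) -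
        ∫ t in Set.Ioi a, Complex.exp (-(z * t)) • f t ∂ν := by
  simp only [integral_exp_neg_mul_complex hz₀]
  rw [← integral_smul, ← integral_smul,
    ← integral_sub (hf.fun_smul _) (integrableOn_exp_neg_mul_smul hz hf)]
  simp only [smul_smul, mul_div_cancel₀ _ hz₀, sub_smul]

end Exp

theorem stmt4_general {E : Type*} [NormedAddCommGroup E] [NormedSpace ℂ E] [CompleteSpace E]
    {ν : Measure ℝ} [SFinite ν] {f : ℝ → E} {a : ℝ} (hf : IntegrableOn f (Set.Ioi a) ν)
    {z : ℂ} (hz : 0 ≤ z.re) (hz₀ : z ≠ 0) :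
    ∃ L : E,
      Tendsto (fun T : ℝ => ∫ x in a..T, Complex.exp (-(z * x)) • ∫ t in Set.Ioi x, f t ∂ν)
        atTop (nhds L) ∧
      z • L = Complex.exp (-(z * a)) • (∫ t in Set.Ioi a, f t ∂ν) -
        ∫ x in Set.Ioi a, Complex.exp (-(z * x)) • f x ∂ν :=
  ⟨∫ t in Set.Ioi a, (∫ x in a..t, Complex.exp (-(z * x))) • f t ∂ν,
    tendsto_intervalIntegral_smul_integral_Ioi
      (fun _ _ => Continuous.intervalIntegrable (by fun_prop) _ _)
      (fun _ => norm_integral_exp_neg_mul_le hz hz₀) hf,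
    smul_integral_Ioi_integral_exp_neg_mul_smul hz hz₀ hf⟩

/-- Proposition 1(c) (integration by parts identity): for `f` Lebesgue integrable on `(0,∞)`,
`F₁(x) = ∫_x^∞ f`, and `s ≠ 0`, the improper integral `lim_{T→∞} ∫_0^T e^{-isx} F₁(x) dx`
exists and `is · lim = F₁(0) − ∫_0^∞ e^{-isx} f(x) dx`. -/
theorem stmt4 (f : ℝ → ℂ) (hf : IntegrableOn f (Set.Ioi 0)) (s : ℝ) (hs : s ≠ 0) :
    ∃ L : ℂ,
      Tendsto (fun T : ℝ => ∫ x in (0:ℝ)..T,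
          Complex.exp (-(Complex.I * (s : ℂ) * (x : ℂ))) * (∫ t in Set.Ioi x, f t))
        atTop (nhds L) ∧
      Complex.I * (s : ℂ) * L =
        (∫ t in Set.Ioi (0:ℝ), f t) -
          ∫ x in Set.Ioi (0:ℝ), Complex.exp (-(Complex.I * (s : ℂ) * (x : ℂ))) * f x := by
  simpa using stmt4_general hf (z := Complex.I * s) (by simp) (by simp [hs])
end

section
/- Let f : ℝ → ℂ be locally integrable, s₀ ∈ ℝ and r > 0, and suppose that for every s with |s − s₀| < r the Fourier transform f̂(s) exists; write F(s) for its value. Then F is continuous at s₀ (as a function on the ball {s : |s − s₀| < r}) if and only if F is quasi-uniformly continuous at s₀, meaning: for every ε > 0 and M > 0 there exist m ≥ M and δ > 0 with δ ≤ r such that for all s with |s − s₀| < δ one has |F(s) − ∫_{-m}^{m} e^{-isx} f(x) dx| < ε. -/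
open MeasureTheory Filter

/-!
A quasi-uniform limit of functions continuous at a point is continuous at that point, by the usual
three-term estimate: one close approximant near the point is enough. Conversely, if the limit `F`
and an approximant `φ i` are both continuous at `x₀` and `F x₀` is close to `φ i x₀`, then `F` and
`φ i` stay close near `x₀`. The truncated transforms `∫_{-m}^{m} e^{-isx} f(x) dx` are continuous
in `s` by dominated convergence, so both implications apply to them.
-/

open scoped Topology Uniformity

section QuasiUniform

variable {ι X E : Type*} {l : Filter ι}

/-- Quasi-uniform convergence (in the sense of Arzelà) of the family `φ` to `F` at `x₀` within `U`:
for every entourage, arbitrarily late members of `φ` are close to `F` on a neighbourhood of `x₀`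
within `U`, which may depend on the member. For truncated Fourier transforms this is the
quasi-uniform continuity of `F`. -/
def TendstoQuasiUniformlyWithinAt [TopologicalSpace X] [UniformSpace E] (φ : ι → X → E)
    (F : X → E) (l : Filter ι) (U : Set X) (x₀ : X) : Prop :=
  ∀ u ∈ 𝓤 E, ∃ᶠ i in l, ∀ᶠ x in 𝓝[U] x₀, (F x, φ i x) ∈ u

section Uniform

variable [TopologicalSpace X] [UniformSpace E] {φ : ι → X → E} {F : X → E} {U : Set X} {x₀ : X}

theorem TendstoQuasiUniformlyWithinAt.continuousWithinAt
    (h : TendstoQuasiUniformlyWithinAt φ F l U x₀) (hx₀ : x₀ ∈ U)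
    (hφ : ∀ᶠ i in l, ContinuousWithinAt (φ i) U x₀) : ContinuousWithinAt F U x₀ := by
  refine continuousWithinAt_of_locally_uniform_approx_of_continuousWithinAt hx₀ fun u hu => ?_
  obtain ⟨i, hclose, hcont⟩ := ((h u hu).and_eventually hφ).exists
  exact ⟨_, hclose, φ i, hcont, fun _ hx => hx⟩

theorem tendstoQuasiUniformlyWithinAt_of_continuousWithinAt [l.NeBot]
    (hF : ContinuousWithinAt F U x₀) (hφ : ∀ᶠ i in l, ContinuousWithinAt (φ i) U x₀)
    (hlim : Tendsto (fun i => φ i x₀) l (𝓝 (F x₀))) :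
    TendstoQuasiUniformlyWithinAt φ F l U x₀ := by
  intro u hu
  have hclose : ∀ᶠ i in l, (F x₀, φ i x₀) ∈ interior u :=
    Uniform.tendsto_nhds_right.1 hlim (interior_mem_uniformity hu)
  refine (hclose.and hφ).frequently.mono fun i ⟨hi, hcont⟩ => ?_
  exact (hF.prodMk hcont).eventually_mem (mem_interior_iff_mem_nhds.1 hi)

theorem continuousWithinAt_iff_tendstoQuasiUniformlyWithinAt [l.NeBot] (hx₀ : x₀ ∈ U)
    (hφ : ∀ᶠ i in l, ContinuousWithinAt (φ i) U x₀)
    (hlim : Tendsto (fun i => φ i x₀) l (𝓝 (F x₀))) :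
    ContinuousWithinAt F U x₀ ↔ TendstoQuasiUniformlyWithinAt φ F l U x₀ :=
  ⟨fun hF => tendstoQuasiUniformlyWithinAt_of_continuousWithinAt hF hφ hlim,
    fun h => h.continuousWithinAt hx₀ hφ⟩

end Uniform

theorem nhds_basis_ball_of_le [PseudoMetricSpace X] (x : X) {r : ℝ} (hr : 0 < r) :
    (𝓝 x).HasBasis (fun δ => 0 < δ ∧ δ ≤ r) (Metric.ball x) :=
  Metric.nhds_basis_ball.restrict fun δ hδ =>
    ⟨min δ r, lt_min hδ hr, min_le_right δ r, Metric.ball_subset_ball (min_le_left δ r)⟩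

theorem atTop_basis_Ici_of_lt [Preorder ι] [IsDirectedOrder ι] [NoMaxOrder ι] (a : ι) :
    (atTop : Filter ι).HasBasis (a < ·) Set.Ici :=
  (atTop_basis' a).to_hasBasis
    (fun b hb => (exists_gt b).imp fun _ hc => ⟨hb.trans_lt hc, Set.Ici_subset_Ici.2 hc.le⟩)
    fun b hb => ⟨b, hb.le, subset_rfl⟩

theorem tendstoQuasiUniformlyWithinAt_ball_iff [PseudoMetricSpace X] [PseudoMetricSpace E]
    [Preorder ι] [IsDirectedOrder ι] [NoMaxOrder ι] {φ : ι → X → E} {F : X → E} {x₀ : X} {r : ℝ}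
    (hr : 0 < r) (a : ι) :
    TendstoQuasiUniformlyWithinAt φ F atTop (Metric.ball x₀ r) x₀ ↔
      ∀ ε > 0, ∀ M > a, ∃ m ≥ M, ∃ δ > 0, δ ≤ r ∧
        ∀ x, dist x x₀ < δ → dist (F x) (φ m x) < ε := by
  have entourages :
      TendstoQuasiUniformlyWithinAt φ F atTop (Metric.ball x₀ r) x₀ ↔
        ∀ ε > 0, ∃ᶠ m in atTop, ∀ᶠ x in 𝓝 x₀, dist (F x) (φ m x) < ε := by
    rw [TendstoQuasiUniformlyWithinAt, nhdsWithin_eq_nhds.2 (Metric.ball_mem_nhds x₀ hr)]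
    exact Metric.uniformity_basis_dist.forall_iff fun u v huv h =>
      h.mono fun _ hm => hm.mono fun _ hx => huv hx
  rw [entourages]
  simp only [(atTop_basis_Ici_of_lt a).frequently_iff, (nhds_basis_ball_of_le x₀ hr).eventually_iff,
    Set.mem_Ici, Metric.mem_ball, and_assoc, gt_iff_lt, ge_iff_le]

end QuasiUniform

section Fourier

theorem locallyIntegrable_of_integrableOn_Icc {E : Type*} [NormedAddCommGroup E] {f : ℝ → E}
    {μ : Measure ℝ} (hf : ∀ a b : ℝ, IntegrableOn f (Set.Icc a b) μ) : LocallyIntegrable f μ :=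
  fun x => ⟨Set.Icc (x - 1) (x + 1), Icc_mem_nhds (sub_one_lt x) (lt_add_one x), hf _ _⟩

variable {E : Type*} [NormedAddCommGroup E] [NormedSpace ℂ E] {f : ℝ → E}

theorem continuous_intervalIntegral_cexp_smul {μ : Measure ℝ} {a b : ℝ}
    (hf : IntervalIntegrable f μ a b) :
    Continuous fun s : ℝ =>
      ∫ x in a..b, Complex.exp (-(Complex.I * (s : ℂ) * (x : ℂ))) • f x ∂μ := by
  refine intervalIntegral.continuous_of_dominated_interval (bound := fun x => ‖f x‖)
    (fun s => ?_) (fun s => ?_) hf.norm ?_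
  · have hexp : Continuous fun x : ℝ => Complex.exp (-(Complex.I * (s : ℂ) * (x : ℂ))) := by
      fun_prop
    exact hexp.aestronglyMeasurable.smul hf.def'.aestronglyMeasurable
  · refine Eventually.of_forall fun x _ => ?_
    simp [norm_smul, Complex.norm_exp]
  · exact Eventually.of_forall fun x _ => by fun_prop

/-- The truncation `∫_{-m}^{m} e^{-isx} f(x) dx` of the Fourier integral of `f` at `s`; its limit
as `m → ∞` is the principal value of that integral. -/
noncomputable def truncatedFourier (f : ℝ → E) (m s : ℝ) : E :=
  ∫ x in (-m)..m, Complex.exp (-(Complex.I * (s : ℂ) * (x : ℂ))) • f x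

theorem continuous_truncatedFourier (hf : LocallyIntegrable f) {m : ℝ} :
    Continuous (truncatedFourier f m) :=
  continuous_intervalIntegral_cexp_smul
    (hf.integrableOn_isCompact isCompact_uIcc).intervalIntegrable

theorem HasFourierHK.tendsto_truncatedFourier {f : ℝ → ℂ} {s : ℝ} {L : ℂ}
    (h : HasFourierHK f s L) : Tendsto (truncatedFourier f · s) atTop (𝓝 L) :=
  h.comp (tendsto_id.prodMk tendsto_id)

theorem stmt5_general [CompleteSpace E] (hf : LocallyIntegrable f) {U : Set ℝ} {s₀ : ℝ}
    (hs₀ : s₀ ∈ U) {F : ℝ → E}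
    (hF : ∀ s ∈ U, Tendsto (truncatedFourier f · s) atTop (𝓝 (F s))) :
    ContinuousWithinAt F U s₀ ↔
      TendstoQuasiUniformlyWithinAt (truncatedFourier f) F atTop U s₀ :=
  continuousWithinAt_iff_tendstoQuasiUniformlyWithinAt hs₀
    (Eventually.of_forall fun _ => (continuous_truncatedFourier hf).continuousWithinAt)
    (hF s₀ hs₀)

end Fourier

/-- Theorem 3 (quasi-uniform continuity): if `f̂(s) = F(s)` exists for all `|s - s₀| < r`,
then `F` is continuous at `s₀` iff `F` is quasi-uniformly continuous at `s₀`. -/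
theorem stmt5 (f : ℝ → ℂ) (hloc : ∀ a b : ℝ, IntegrableOn f (Set.Icc a b))
    (s₀ r : ℝ) (hr : 0 < r) (F : ℝ → ℂ)
    (hF : ∀ s : ℝ, |s - s₀| < r → HasFourierHK f s (F s)) :
    ContinuousWithinAt F {s : ℝ | |s - s₀| < r} s₀ ↔
      ∀ ε > (0:ℝ), ∀ M > (0:ℝ), ∃ m ≥ M, ∃ δ > (0:ℝ), δ ≤ r ∧
        ∀ s : ℝ, |s - s₀| < δ →
          ‖F s - ∫ x in (-m)..m, Complex.exp (-(Complex.I * (s : ℂ) * (x : ℂ))) * f x‖ < ε := by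
  have hcont := stmt5_general (locallyIntegrable_of_integrableOn_Icc hloc)
    (Metric.mem_ball_self hr) fun s hs => (hF s hs).tendsto_truncatedFourier
  simpa only [dist_eq_norm, Real.norm_eq_abs, Metric.ball, truncatedFourier, smul_eq_mul] using
    hcont.trans (tendstoQuasiUniformlyWithinAt_ball_iff hr 0)
end

section
/- Let f : ℝ → ℂ be locally integrable, let α < β, and suppose that for every s ∈ [α,β] the Fourier transform f̂(s) exists; write F(s) for its value. Suppose also that g(x) := x·f(x) is Lebesgue integrable on ℝ, and let ĝ(s) = ∫_{-∞}^{∞} e^{-isx} x f(x) dx be its (Lebesgue) Fourier transform. Then for every s ∈ (α,β), F is differentiable at s with F′(s) = −i·ĝ(s). -/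
/-!
Away from `0`, `f` is a bounded multiple of `x ↦ x f(x)`, so local integrability at `0` makes `f`
absolutely integrable. The improper transform is then the Lebesgue transform, which can be
differentiated under the integral sign because `|x f(x)|` dominates the `s`-derivative of the
integrand.
-/

open MeasureTheory Filter

open scoped FourierTransform

section Integrability

variable {X 𝕜 E : Type*} [NormedField 𝕜] [NormedAddCommGroup E] [NormedSpace 𝕜 E]

theorem integrableOn_of_smul_of_le_norm [MeasurableSpace X] {μ : Measure X} {s : Set X}
    {φ : X → 𝕜} {f : X → E} {ε : ℝ} (hε : 0 < ε) (hs : MeasurableSet s)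
    (hφ : AEStronglyMeasurable φ (μ.restrict s)) (hεφ : ∀ x ∈ s, ε ≤ ‖φ x‖)
    (hφf : IntegrableOn (fun x => φ x • f x) s μ) : IntegrableOn f s μ := by
  have inv_bound : ∀ᵐ x ∂μ.restrict s, ‖(φ x)⁻¹‖ ≤ ε⁻¹ :=
    ae_restrict_of_forall_mem hs fun x hx => by
      rw [norm_inv]
      exact inv_anti₀ hε (hεφ x hx)
  refine (hφf.bdd_smul ε⁻¹ hφ.inv₀ inv_bound).congr ?_
  refine ae_restrict_of_forall_mem hs fun x hx => ?_
  exact inv_smul_smul₀ (norm_pos_iff.mp (hε.trans_le (hεφ x hx))) (f x)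

theorem integrable_of_integrableAtFilter_zero_of_integrable_smul [MeasurableSpace 𝕜]
    [OpensMeasurableSpace 𝕜] [SecondCountableTopology 𝕜] {μ : Measure 𝕜} {f : 𝕜 → E}
    (hf : IntegrableAtFilter f (nhds 0) μ) (hxf : Integrable (fun x => x • f x) μ) :
    Integrable f μ := by
  obtain ⟨s, hs, hfs⟩ := hf
  obtain ⟨ε, hε, ball_subset⟩ := Metric.mem_nhds_iff.mp hs
  have near_zero : IntegrableOn f (Metric.ball 0 ε) μ := hfs.mono_set ball_subset
  have away_from_zero : IntegrableOn f (Metric.ball 0 ε)ᶜ μ :=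
    integrableOn_of_smul_of_le_norm hε measurableSet_ball.compl
      continuous_id.aestronglyMeasurable (fun x hx => by simpa using hx) hxf.integrableOn
  rw [← integrableOn_univ, ← Set.union_compl_self (Metric.ball 0 ε)]
  exact near_zero.union away_from_zero

end Integrability

section AngularFourier

variable {E : Type*} [NormedAddCommGroup E] [NormedSpace ℂ E]

/-- The Lebesgue Fourier transform with kernel `e^{-isx}`, that is, as a function of the angular
frequency `s`, whereas Mathlib's `𝓕` has kernel `e^{-2πisx}`. -/
noncomputable def angularFourier (f : ℝ → E) (s : ℝ) : E :=
  ∫ x : ℝ, Complex.exp (-(Complex.I * (s : ℂ) * (x : ℂ))) • f x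

theorem angularFourier_const_smul (c : ℂ) (f : ℝ → E) (s : ℝ) :
    angularFourier (fun x => c • f x) s = c • angularFourier f s := by
  simp only [angularFourier, smul_comm _ c, integral_smul]

theorem fourier_div_two_pi (f : ℝ → E) (s : ℝ) :
    𝓕 f (s / (2 * Real.pi)) = angularFourier f s := by
  rw [Real.fourier_real_eq_integral_exp_smul, angularFourier]
  congr! 4 with x
  push_cast
  field_simp

theorem hasDerivAt_angularFourier {f : ℝ → E} (hf : Integrable f)
    (hxf : Integrable (fun x : ℝ => x • f x)) (s : ℝ) :
    HasDerivAt (angularFourier f) (-Complex.I • angularFourier (fun x : ℝ => x • f x) s) s := by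
  have deriv_fourier := (Real.hasDerivAt_fourier hf hxf (s / (2 * Real.pi))).scomp s
    ((hasDerivAt_id s).div_const (2 * Real.pi))
  have transform_eq : 𝓕 f ∘ (fun t => t / (2 * Real.pi)) = angularFourier f :=
    funext (fourier_div_two_pi f)
  have multiplier_eq : (fun x : ℝ => (-2 * Real.pi * Complex.I * x : ℂ) • f x) =
      fun x : ℝ => (-2 * Real.pi * Complex.I : ℂ) • x • f x := by
    simp only [mul_smul, Complex.coe_smul]
  have two_pi_cancel :
      ((1 / (2 * Real.pi) : ℝ) : ℂ) * (-2 * Real.pi * Complex.I) = -Complex.I := by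
    push_cast
    field_simp
  refine transform_eq ▸ deriv_fourier.congr_deriv ?_
  rw [fourier_div_two_pi, multiplier_eq, angularFourier_const_smul, ← Complex.coe_smul,
    smul_smul, two_pi_cancel]

theorem integrable_exp_neg_mul_smul {f : ℝ → E} (hf : Integrable f) (s : ℝ) :
    Integrable fun x : ℝ => Complex.exp (-(Complex.I * (s : ℂ) * (x : ℂ))) • f x := by
  refine hf.bdd_smul 1 (by fun_prop) (ae_of_all _ fun x => ?_)
  simp [Complex.norm_exp]

end AngularFourier

theorem hasFourierHK_angularFourier {f : ℝ → ℂ} (hf : Integrable f) (s : ℝ) :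
    HasFourierHK f s (angularFourier f s) :=
  intervalIntegral_tendsto_integral (integrable_exp_neg_mul_smul hf s)
    (tendsto_neg_atTop_atBot.comp tendsto_fst) tendsto_snd

theorem HasFourierHK.eq_angularFourier {f : ℝ → ℂ} {s : ℝ} {L : ℂ} (h : HasFourierHK f s L)
    (hf : Integrable f) : L = angularFourier f s :=
  tendsto_nhds_unique h (hasFourierHK_angularFourier hf s)

theorem stmt9_general (f : ℝ → ℂ) (hloc : IntegrableAtFilter f (nhds 0)) (S : Set ℝ) (F : ℝ → ℂ)
    (hF : ∀ s ∈ S, HasFourierHK f s (F s))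
    (hg : Integrable (fun x : ℝ => (x : ℂ) * f x)) :
    ∀ s ∈ S,
      HasDerivWithinAt F
        (-Complex.I * ∫ x : ℝ, Complex.exp (-(Complex.I * (s : ℂ) * (x : ℂ))) * ((x : ℂ) * f x))
        S s := by
  intro s hs
  have hxf : Integrable (fun x : ℝ => x • f x) := hg
  have hf : Integrable f := integrable_of_integrableAtFilter_zero_of_integrable_smul hloc hxf
  have F_eq : ∀ t ∈ S, F t = angularFourier f t := fun t ht => (hF t ht).eq_angularFourier hf
  exact (hasDerivAt_angularFourier hf hxf s).hasDerivWithinAt.congr F_eq (F_eq s hs)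

/-- Proposition 5 (frequency differentiation): if `f̂ = F` exists on `[α,β]` and
`g(x) = x f(x)` is Lebesgue integrable on `ℝ`, then `F′(s) = −i ĝ(s)` on `(α,β)`. -/
theorem stmt9 (f : ℝ → ℂ) (hloc : ∀ a b : ℝ, IntegrableOn f (Set.Icc a b))
    (α β : ℝ) (hαβ : α < β) (F : ℝ → ℂ)
    (hF : ∀ s ∈ Set.Icc α β, HasFourierHK f s (F s))
    (hg : Integrable (fun x : ℝ => (x : ℂ) * f x)) :
    ∀ s ∈ Set.Ioo α β,
      HasDerivWithinAt F
        (-Complex.I * ∫ x : ℝ, Complex.exp (-(Complex.I * (s : ℂ) * (x : ℂ))) * ((x : ℂ) * f x))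
        (Set.Icc α β) s := by
  exact fun s hs => stmt9_general f ⟨_, Icc_mem_nhds neg_one_lt_zero one_pos, hloc (-1) 1⟩ _ F hF
    hg s (Set.Ioo_subset_Icc_self hs)
end

section
/- Let f : ℝ → ℂ and f′ : ℝ → ℂ be such that f′ is locally integrable, f(y) − f(x) = ∫_x^y f′(t) dt for all real x ≤ y, and f(x) → 0 as x → ∞ and as x → −∞. Then for every s ≠ 0: the Fourier transform (f′)^(s) exists if and only if the Fourier transform f̂(s) exists, and when they exist, (f′)^(s) = i s · f̂(s). -/
open MeasureTheory Filter

/-! Integrating `e^{-isx} f'(x)` by parts over `[-T₁, T₂]` leaves `i s ∫ e^{-isx} f(x) dx` plus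
boundary terms of modulus `|f(T₂)|` and `|f(-T₁)|`, which vanish in the limit; so the truncated
integrals of `f'` converge exactly when `i s` times those of `f` do, to the same limit.
Since `f'` is merely integrable, `f` need not be differentiable everywhere, and integration by
parts is obtained from Fubini's theorem on the triangle `x ≤ t`. -/

section IntegrationByParts

open scoped Interval

variable {𝕜 E : Type*} [RCLike 𝕜] [NormedAddCommGroup E] [NormedSpace ℝ E] {a b : ℝ}

theorem setIntegral_Ioc_triangle_swap {μ : Measure ℝ} [SFinite μ] [NullSingletonClass μ]
    {F : ℝ → ℝ → E} (hF : IntegrableOn F.uncurry (Set.Ioc a b ×ˢ Set.Ioc a b) (μ.prod μ)) :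
    ∫ x in Set.Ioc a b, ∫ t in Set.Ioc x b, F x t ∂μ ∂μ =
      ∫ t in Set.Ioc a b, ∫ x in Set.Ioc a t, F x t ∂μ ∂μ := by
  let G (x t : ℝ) : E := {p : ℝ × ℝ | p.1 ≤ p.2}.indicator F.uncurry (x, t)
  have hG : Integrable G.uncurry ((μ.restrict (Set.Ioc a b)).prod (μ.restrict (Set.Ioc a b))) := by
    rw [Measure.prod_restrict]
    exact hF.indicator (measurableSet_le measurable_fst measurable_snd)
  have integral_right (x : ℝ) (hx : x ∈ Set.Ioc a b) :
      ∫ t in Set.Ioc x b, F x t ∂μ = ∫ t in Set.Ioc a b, G x t ∂μ := by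
    have hinter : Set.Ioc a b ∩ Set.Ici x = Set.Icc x b := by
      ext t; simp only [Set.mem_inter_iff, Set.mem_Ioc, Set.mem_Ici, Set.mem_Icc]; grind
    rw [← integral_Icc_eq_integral_Ioc, ← hinter, ← setIntegral_indicator measurableSet_Ici]
    rfl
  have integral_left (t : ℝ) (ht : t ∈ Set.Ioc a b) :
      ∫ x in Set.Ioc a t, F x t ∂μ = ∫ x in Set.Ioc a b, G x t ∂μ := by
    have hinter : Set.Ioc a b ∩ Set.Iic t = Set.Ioc a t := by
      rw [Set.Ioc_inter_Iic, min_eq_right ht.2]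
    rw [← hinter, ← setIntegral_indicator measurableSet_Iic]
    rfl
  rw [setIntegral_congr_fun measurableSet_Ioc integral_right,
    setIntegral_congr_fun measurableSet_Ioc integral_left]
  exact integral_integral_swap hG

theorem intervalIntegral_triangle_swap {μ : Measure ℝ} [SFinite μ] [NullSingletonClass μ]
    {F : ℝ → ℝ → E} (hF : IntegrableOn F.uncurry (Ι a b ×ˢ Ι a b) (μ.prod μ)) :
    ∫ x in a..b, ∫ t in x..b, F x t ∂μ ∂μ = ∫ t in a..b, ∫ x in a..t, F x t ∂μ ∂μ := by
  wlog hab : a ≤ b generalizing a b F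
  · have hF' : IntegrableOn (fun x t => F t x).uncurry (Ι b a ×ˢ Ι b a) (μ.prod μ) := by
      rw [Set.uIoc_comm b a, IntegrableOn, ← Measure.prod_restrict]
      rw [IntegrableOn, ← Measure.prod_restrict] at hF
      exact hF.swap
    simpa only [intervalIntegral.integral_symm _ a, intervalIntegral.integral_symm b,
      intervalIntegral.integral_neg, neg_neg] using (this hF' (le_of_not_ge hab)).symm
  rw [Set.uIoc_of_le hab] at hF
  rw [intervalIntegral.integral_of_le hab, intervalIntegral.integral_of_le hab,
    setIntegral_congr_fun measurableSet_Ioc fun x hx => intervalIntegral.integral_of_le hx.2,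
    setIntegral_congr_fun measurableSet_Ioc fun t ht => intervalIntegral.integral_of_le ht.1.le]
  exact setIntegral_Ioc_triangle_swap hF

/-- `u` is an indefinite Lebesgue integral of `u'` on the interval with endpoints `a` and `b`, in
either order. This weakens differentiability to what integration by parts requires. -/
structure IsIndefiniteIntegralOn (u u' : ℝ → E) (a b : ℝ) : Prop where
  intervalIntegrable : IntervalIntegrable u' volume a b
  sub_eq_integral : ∀ x ∈ [[a, b]], ∀ y ∈ [[a, b]], u y - u x = ∫ t in x..y, u' t

namespace IsIndefiniteIntegralOn

theorem of_forall_le {u u' : ℝ → E} (hint : IntervalIntegrable u' volume a b)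
    (hsub : ∀ x ∈ [[a, b]], ∀ y ∈ [[a, b]], x ≤ y → u y - u x = ∫ t in x..y, u' t) :
    IsIndefiniteIntegralOn u u' a b where
  intervalIntegrable := hint
  sub_eq_integral x hx y hy := by
    rcases le_total x y with hxy | hyx
    · exact hsub x hx y hy hxy
    · rw [intervalIntegral.integral_symm, ← hsub y hy x hx hyx, neg_sub]

theorem of_hasDerivAt [CompleteSpace E] {u u' : ℝ → E}
    (hderiv : ∀ x ∈ [[a, b]], HasDerivAt u (u' x) x)
    (hint : IntervalIntegrable u' volume a b) : IsIndefiniteIntegralOn u u' a b where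
  intervalIntegrable := hint
  sub_eq_integral _ hx _ hy :=
    have hsubset := Set.uIcc_subset_uIcc hx hy
    (intervalIntegral.integral_eq_sub_of_hasDerivAt (fun t ht => hderiv t (hsubset ht))
      (hint.mono_set hsubset)).symm

theorem continuousOn {u u' : ℝ → E} (hu : IsIndefiniteIntegralOn u u' a b) :
    ContinuousOn u [[a, b]] := by
  have hprimitive : ContinuousOn (fun x => u a + ∫ t in a..x, u' t) [[a, b]] :=
    continuousOn_const.add <| intervalIntegral.continuousOn_primitive_interval'
      hu.intervalIntegrable Set.left_mem_uIcc
  exact hprimitive.congr fun x hx => by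
    simp only [← hu.sub_eq_integral a Set.left_mem_uIcc x hx, add_sub_cancel]

theorem integral_smul_deriv_eq_deriv_smul [NormedSpace 𝕜 E] [CompleteSpace E]
    {u u' : ℝ → 𝕜} {v v' : ℝ → E}
    (hu : IsIndefiniteIntegralOn u u' a b) (hv : IsIndefiniteIntegralOn v v' a b) :
    ∫ x in a..b, u x • v' x = u b • v b - u a • v a - ∫ x in a..b, u' x • v x := by
  have ha : a ∈ [[a, b]] := Set.left_mem_uIcc
  have hb : b ∈ [[a, b]] := Set.right_mem_uIcc
  have hint : IntegrableOn (fun x t => u' x • v' t).uncurry (Ι a b ×ˢ Ι a b)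
      (volume.prod volume) := by
    rw [IntegrableOn, ← Measure.prod_restrict]
    exact hu.intervalIntegrable.def'.smul_prod hv.intervalIntegrable.def'
  have hright : ∫ x in a..b, ∫ t in x..b, u' x • v' t =
      (u b - u a) • v b - ∫ x in a..b, u' x • v x := by
    calc ∫ x in a..b, ∫ t in x..b, u' x • v' t
        = ∫ x in a..b, (u' x • v b - u' x • v x) :=
          intervalIntegral.integral_congr fun x hx => by
            simp only [intervalIntegral.integral_smul, ← hv.sub_eq_integral x hx b hb, smul_sub]
      _ = (u b - u a) • v b - ∫ x in a..b, u' x • v x := by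
          rw [intervalIntegral.integral_sub
              (hu.intervalIntegrable.smul_continuousOn continuousOn_const)
              (hu.intervalIntegrable.smul_continuousOn hv.continuousOn),
            intervalIntegral.integral_smul_const, ← hu.sub_eq_integral a ha b hb]
  have hleft : ∫ t in a..b, ∫ x in a..t, u' x • v' t =
      (∫ x in a..b, u x • v' x) - u a • (v b - v a) := by
    calc ∫ t in a..b, ∫ x in a..t, u' x • v' t
        = ∫ t in a..b, (u t • v' t - u a • v' t) :=
          intervalIntegral.integral_congr fun t ht => by
            simp only [intervalIntegral.integral_smul_const, ← hu.sub_eq_integral a ha t ht,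
              sub_smul]
      _ = (∫ x in a..b, u x • v' x) - u a • (v b - v a) := by
          rw [intervalIntegral.integral_sub
              (hv.intervalIntegrable.continuousOn_smul hu.continuousOn)
              (hv.intervalIntegrable.continuousOn_smul continuousOn_const),
            intervalIntegral.integral_smul, ← hv.sub_eq_integral a ha b hb]
  have hparts := hleft.symm.trans ((intervalIntegral_triangle_swap hint).symm.trans hright)
  rw [sub_eq_iff_eq_add.1 hparts, sub_smul, smul_sub]
  abel

end IsIndefiniteIntegralOn

end IntegrationByParts

section FourierIntegral

variable {E : Type*} [NormedAddCommGroup E] [NormedSpace ℂ E] {f f' : ℝ → E} {s : ℝ}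

/-- The kernel `e^{-isx}` of the Fourier transform, without the factor `2π` of
`Real.fourierChar`. -/
noncomputable def fourierKernel (s x : ℝ) : ℂ :=
  Complex.exp (-(Complex.I * (s : ℂ) * (x : ℂ)))

theorem norm_fourierKernel (s x : ℝ) : ‖fourierKernel s x‖ = 1 := by
  simp [fourierKernel, Complex.norm_exp]

theorem hasDerivAt_fourierKernel (s x : ℝ) :
    HasDerivAt (fourierKernel s) (-(Complex.I * s) * fourierKernel s x) x := by
  have hexponent : HasDerivAt (fun y : ℝ => -(Complex.I * (s : ℂ) * (y : ℂ)))
      (-(Complex.I * s * 1)) x :=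
    ((hasDerivAt_id x).ofReal_comp.const_mul (Complex.I * (s : ℂ))).fun_neg
  rw [mul_comm, ← mul_one (Complex.I * (s : ℂ))]
  exact hexponent.cexp

theorem continuous_fourierKernel (s : ℝ) : Continuous (fourierKernel s) := by
  unfold fourierKernel
  fun_prop

/-- Convergence to `L` of the improper Fourier integral at `s` of a vector-valued `f`, the two ends
of the interval going to infinity independently; for `E = ℂ` this unfolds to `HasFourierHK`. -/
def HasFourierIntegral (f : ℝ → E) (s : ℝ) (L : E) : Prop :=
  Tendsto (fun T : ℝ × ℝ => ∫ x in (-T.1)..T.2, fourierKernel s x • f x)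
    (atTop ×ˢ atTop) (nhds L)

theorem integral_fourierKernel_smul_deriv_sub [CompleteSpace E] {a b : ℝ}
    (hf : IsIndefiniteIntegralOn f f' a b) :
    (∫ x in a..b, fourierKernel s x • f' x) -
        (Complex.I * s) • ∫ x in a..b, fourierKernel s x • f x =
      fourierKernel s b • f b - fourierKernel s a • f a := by
  have hkernel : IsIndefiniteIntegralOn (fourierKernel s)
      (fun x => -(Complex.I * s) * fourierKernel s x) a b :=
    .of_hasDerivAt (fun x _ => hasDerivAt_fourierKernel s x)
      ((continuous_const.mul (continuous_fourierKernel s)).intervalIntegrable a b)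
  rw [hkernel.integral_smul_deriv_eq_deriv_smul hf]
  simp only [mul_smul, neg_smul, intervalIntegral.integral_neg, intervalIntegral.integral_smul]
  abel

theorem tendsto_fourierKernel_smul_zero {l : Filter ℝ} (hf : Tendsto f l (nhds 0)) :
    Tendsto (fun x => fourierKernel s x • f x) l (nhds 0) := by
  rw [tendsto_zero_iff_norm_tendsto_zero] at hf ⊢
  simpa only [norm_smul, norm_fourierKernel, one_mul] using hf

theorem tendsto_integral_fourierKernel_smul_deriv_sub [CompleteSpace E]
    (hf : ∀ a b, IsIndefiniteIntegralOn f f' a b)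
    (htop : Tendsto f atTop (nhds 0)) (hbot : Tendsto f atBot (nhds 0)) :
    Tendsto (fun T : ℝ × ℝ => (∫ x in (-T.1)..T.2, fourierKernel s x • f' x) -
        (Complex.I * s) • ∫ x in (-T.1)..T.2, fourierKernel s x • f x)
      (atTop ×ˢ atTop) (nhds 0) := by
  simp only [integral_fourierKernel_smul_deriv_sub (hf _ _)]
  rw [← sub_zero (0 : E)]
  exact ((tendsto_fourierKernel_smul_zero htop).comp tendsto_snd).sub
    ((tendsto_fourierKernel_smul_zero hbot).comp (tendsto_neg_atTop_atBot.comp tendsto_fst))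

theorem hasFourierIntegral_deriv_iff [CompleteSpace E]
    (hf : ∀ a b, IsIndefiniteIntegralOn f f' a b)
    (htop : Tendsto f atTop (nhds 0)) (hbot : Tendsto f atBot (nhds 0)) (hs : s ≠ 0) {M : E} :
    HasFourierIntegral f' s ((Complex.I * s) • M) ↔ HasFourierIntegral f s M := by
  have hIs : Complex.I * (s : ℂ) ≠ 0 := mul_ne_zero Complex.I_ne_zero (Complex.ofReal_ne_zero.2 hs)
  have hdist := tendsto_zero_iff_norm_tendsto_zero.1
    (tendsto_integral_fourierKernel_smul_deriv_sub (s := s) hf htop hbot)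
  simp only [← dist_eq_norm] at hdist
  exact (tendsto_iff_of_dist hdist).trans (tendsto_const_smul_iff₀ hIs)

theorem stmt10_general [CompleteSpace E] (f f' : ℝ → E)
    (hloc : ∀ a b : ℝ, IntegrableOn f' (Set.Icc a b))
    (hftc : ∀ x y : ℝ, x ≤ y → f y - f x = ∫ t in x..y, f' t)
    (hlim₁ : Tendsto f atTop (nhds 0)) (hlim₂ : Tendsto f atBot (nhds 0)) :
    ∀ s : ℝ, s ≠ 0 →
      ((∃ L : E, HasFourierIntegral f' s L) ↔ (∃ M : E, HasFourierIntegral f s M)) ∧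
      (∀ L M : E, HasFourierIntegral f' s L → HasFourierIntegral f s M →
        L = (Complex.I * (s : ℂ)) • M) := by
  intro s hs
  have hf (a b : ℝ) : IsIndefiniteIntegralOn f f' a b :=
    .of_forall_le (intervalIntegrable_iff.2 ((hloc _ _).mono_set Set.uIoc_subset_uIcc))
      fun x _ y _ => hftc x y
  have hderiv_iff (M : E) := hasFourierIntegral_deriv_iff hf hlim₁ hlim₂ hs (M := M)
  have hIs : Complex.I * (s : ℂ) ≠ 0 := mul_ne_zero Complex.I_ne_zero (Complex.ofReal_ne_zero.2 hs)
  refine ⟨⟨fun ⟨L, hL⟩ => ⟨(Complex.I * s)⁻¹ • L, (hderiv_iff _).1 ?_⟩,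
    fun ⟨M, hM⟩ => ⟨_, (hderiv_iff M).2 hM⟩⟩,
    fun L M hL hM => tendsto_nhds_unique hL ((hderiv_iff M).2 hM)⟩
  rwa [smul_inv_smul₀ hIs]

end FourierIntegral

/-- Proposition 6(a) (time differentiation): if `f` is an indefinite integral of `f′`
with limit `0` at `±∞`, then for `s ≠ 0`, `(f′)^(s)` exists iff `f̂(s)` exists, and then
`(f′)^(s) = i s f̂(s)`. -/
theorem stmt10 (f f' : ℝ → ℂ)
    (hloc : ∀ a b : ℝ, IntegrableOn f' (Set.Icc a b))
    (hftc : ∀ x y : ℝ, x ≤ y → f y - f x = ∫ t in x..y, f' t)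
    (hlim₁ : Tendsto f atTop (nhds 0)) (hlim₂ : Tendsto f atBot (nhds 0)) :
    ∀ s : ℝ, s ≠ 0 →
      ((∃ L : ℂ, HasFourierHK f' s L) ↔ (∃ L : ℂ, HasFourierHK f s L)) ∧
      (∀ L M : ℂ, HasFourierHK f' s L → HasFourierHK f s M →
        L = Complex.I * (s : ℂ) * M) :=
  stmt10_general f f' hloc hftc hlim₁ hlim₂
end

section
/- Let f : ℝ → ℂ be locally integrable and let g : ℝ → ℝ have bounded variation on ℝ with support contained in a compact interval [a,b]. Then for every x ∈ ℝ the convolution f∗g(x) = ∫_a^b f(x−t) g(t) dt exists as a Lebesgue integral, and |f∗g(x)| ≤ |∫_{x−b}^{x−a} f| · inf_{t∈[a,b]} |g(t)| + (sup_{x−b ≤ c ≤ d ≤ x−a} |∫_c^d f|) · V_{[a,b]} g. -/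
open MeasureTheory Filter

/-!
Split `g = g(c) + (g - g(c))`: the constant contributes `|g(c)|` times the integral of `f`, and one
takes the infimum over `c`. For the remainder, by the Jordan decomposition it suffices to treat a
monotone `p` in place of `g`. The layer-cake formula writes `p(t) - p(c)` as the integral over
levels `l ∈ [p(a), p(b)]` of `𝟙_{l < p(t)} - 𝟙_{l < p(c)}`. At a fixed level this is, up to sign,
the indicator of `{p > l}` or of `{p ≤ l}`, an interval because `p` is monotone, so its integral
against `h(t) = f(x - t)` is at most the Alexiewicz norm. Fubini then bounds the whole
integral by that norm times `p(b) - p(a)`, and these increments add up to the variation of `g`.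
-/

section Convolution

open Set

variable {E : Type*} [NormedAddCommGroup E] [NormedSpace ℝ E] {f h : ℝ → E} {g p : ℝ → ℝ}
  {a b c d : ℝ}

/-- The Alexiewicz norm of `f` over `[c, d]`: the supremum of the norms of the integrals of `f`
over the compact subintervals of `[c, d]`. The supremum is that of a set of reals, so it is the
intended quantity only for `f` integrable on `[c, d]`. -/
noncomputable def alexiewiczNorm (f : ℝ → E) (c d : ℝ) : ℝ :=
  sSup {r : ℝ | ∃ c' d' : ℝ, c ≤ c' ∧ c' ≤ d' ∧ d' ≤ d ∧ r = ‖∫ u in c'..d', f u‖}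

lemma alexiewiczNorm_nonneg (f : ℝ → E) (c d : ℝ) : 0 ≤ alexiewiczNorm f c d := by
  refine Real.sSup_nonneg ?_
  rintro _ ⟨c', d', -, -, -, rfl⟩
  exact norm_nonneg _

lemma norm_integral_le_alexiewiczNorm (hf : IntervalIntegrable f volume a b)
    (hac : a ≤ c) (hcd : c ≤ d) (hdb : d ≤ b) :
    ‖∫ u in c..d, f u‖ ≤ alexiewiczNorm f a b := by
  refine le_csSup ⟨∫ u in a..b, ‖f u‖, ?_⟩ ⟨c, d, hac, hcd, hdb, rfl⟩
  rintro _ ⟨c', d', hac', hcd', hdb', rfl⟩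
  calc ‖∫ u in c'..d', f u‖
      ≤ ∫ u in c'..d', ‖f u‖ := intervalIntegral.norm_integral_le_integral_norm hcd'
    _ ≤ ∫ u in a..b, ‖f u‖ := intervalIntegral.integral_mono_interval hac' hcd' hdb'
        (Eventually.of_forall fun _ => norm_nonneg _) hf.norm

lemma norm_setIntegral_le_alexiewiczNorm (hf : IntervalIntegrable f volume a b) {s : Set ℝ}
    (hs : s.OrdConnected) (hsub : s ⊆ Icc a b) :
    ‖∫ u in s, f u‖ ≤ alexiewiczNorm f a b := by
  obtain rfl | hne := s.eq_empty_or_nonempty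
  · simpa only [setIntegral_empty, norm_zero] using alexiewiczNorm_nonneg f a b
  have hbelow : BddBelow s := bddBelow_Icc.mono hsub
  have habove : BddAbove s := bddAbove_Icc.mono hsub
  have hae : s =ᵐ[volume] Ioc (sInf s) (sSup s) := by
    refine EventuallyLE.antisymm ?_ ?_
    · exact (subset_Icc_csInf_csSup hbelow habove).eventuallyLE.trans Ioc_ae_eq_Icc.symm.le
    · exact Ioo_ae_eq_Ioc.symm.le.trans
        (IsConnected.Ioo_csInf_csSup_subset ⟨hne, hs.isPreconnected⟩ hbelow habove).eventuallyLE
  have hle : sInf s ≤ sSup s := csInf_le_csSup hne hbelow habove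
  rw [setIntegral_congr_set hae, ← intervalIntegral.integral_of_le hle]
  exact norm_integral_le_alexiewiczNorm hf (le_csInf hne fun u hu => (hsub hu).1) hle
    (csSup_le hne fun u hu => (hsub hu).2)

lemma alexiewiczNorm_comp_sub_left (f : ℝ → E) (a b x : ℝ) :
    alexiewiczNorm (fun t => f (x - t)) a b = alexiewiczNorm f (x - b) (x - a) := by
  refine congrArg sSup (Set.ext fun r => ⟨?_, ?_⟩)
  · rintro ⟨c, d, hac, hcd, hdb, rfl⟩
    exact ⟨x - d, x - c, by linarith, by linarith, by linarith, by
      rw [intervalIntegral.integral_comp_sub_left]⟩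
  · rintro ⟨c, d, hbc, hcd, hda, rfl⟩
    exact ⟨x - d, x - c, by linarith, by linarith, by linarith, by
      rw [intervalIntegral.integral_comp_sub_left, sub_sub_cancel, sub_sub_cancel]⟩

/-- The layer-cake kernel `𝟙_{l < y} - 𝟙_{l < z}`, which represents the difference
`y - z` as an integral over the levels `l` of any interval containing `y` and `z`. -/
noncomputable def layerKernel (y z l : ℝ) : ℝ :=
  (Iio y).indicator 1 l - (Iio z).indicator 1 l

lemma measurable_layerKernel (z : ℝ) : Measurable fun yl : ℝ × ℝ => layerKernel yl.1 z yl.2 := by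
  have hlt : Measurable fun yl : ℝ × ℝ => (Iio yl.1).indicator (1 : ℝ → ℝ) yl.2 :=
    measurable_const.indicator (measurableSet_lt measurable_snd measurable_fst)
  exact hlt.sub ((measurable_const.indicator measurableSet_Iio).comp measurable_snd)

lemma abs_layerKernel_le_one (y z l : ℝ) : |layerKernel y z l| ≤ 1 := by
  by_cases hy : l < y <;> by_cases hz : l < z <;> simp [layerKernel, hy, hz]

lemma integral_indicator_Iio_one {y : ℝ} (hy : y ∈ Icc c d) :
    ∫ l in c..d, (Iio y).indicator (1 : ℝ → ℝ) l = y - c := by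
  rw [intervalIntegral.integral_of_le (hy.1.trans hy.2), setIntegral_indicator measurableSet_Iio]
  have hset : Ioc c d ∩ Iio y = Ioo c y := by
    ext l
    exact ⟨fun hl => ⟨hl.1.1, hl.2⟩, fun hl => ⟨⟨hl.1, hl.2.le.trans hy.2⟩, hl.2⟩⟩
  simp [hset, hy.1]

lemma integral_layerKernel {y z : ℝ} (hy : y ∈ Icc c d) (hz : z ∈ Icc c d) :
    ∫ l in c..d, layerKernel y z l = y - z := by
  have hind : ∀ w : ℝ, IntervalIntegrable ((Iio w).indicator (1 : ℝ → ℝ)) volume c d := fun w =>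
    ⟨(integrable_const 1).indicator measurableSet_Iio,
      (integrable_const 1).indicator measurableSet_Iio⟩
  simp only [layerKernel]
  rw [intervalIntegral.integral_sub (hind y) (hind z),
    integral_indicator_Iio_one hy, integral_indicator_Iio_one hz, sub_sub_sub_cancel_right]

lemma norm_integral_layerKernel_smul_le (hab : a ≤ b) (hp : Monotone p)
    (hh : IntervalIntegrable h volume a b) (z l : ℝ) :
    ‖∫ t in a..b, layerKernel (p t) z l • h t‖ ≤ alexiewiczNorm h a b := by
  have hIoc : Ioc a b ⊆ Icc a b := Ioc_subset_Icc_self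
  rw [intervalIntegral.integral_of_le hab]
  by_cases hz : l < z
  · have hker : (fun t => layerKernel (p t) z l • h t) =
        fun t => -(p ⁻¹' Iic l).indicator h t := by
      ext t
      by_cases hl : l < p t <;> simp [layerKernel, hz, hl, indicator]
    rw [hker, integral_neg, norm_neg, setIntegral_indicator (hp.measurable measurableSet_Iic)]
    exact norm_setIntegral_le_alexiewiczNorm hh
      (ordConnected_Ioc.inter (ordConnected_Iic.preimage_mono hp)) (inter_subset_left.trans hIoc)
  · have hker : (fun t => layerKernel (p t) z l • h t) = (p ⁻¹' Ioi l).indicator h := by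
      ext t
      by_cases hl : l < p t <;> simp [layerKernel, hz, hl, indicator]
    rw [hker, setIntegral_indicator (hp.measurable measurableSet_Ioi)]
    exact norm_setIntegral_le_alexiewiczNorm hh
      (ordConnected_Ioc.inter (ordConnected_Ioi.preimage_mono hp)) (inter_subset_left.trans hIoc)

lemma integral_sub_smul_eq_integral_layerKernel [CompleteSpace E] (hab : a ≤ b) (hp : Monotone p)
    (hh : IntervalIntegrable h volume a b) (hc : c ∈ Icc a b) :
    ∫ t in a..b, (p t - p c) • h t =
      ∫ l in p a..p b, ∫ t in a..b, layerKernel (p t) (p c) l • h t := by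
  have hmem : ∀ t ∈ Icc a b, p t ∈ Icc (p a) (p b) := fun t ht => ⟨hp ht.1, hp ht.2⟩
  have hintegrable : Integrable (fun tl : ℝ × ℝ => layerKernel (p tl.1) (p c) tl.2 • h tl.1)
      ((volume.restrict (Ioc a b)).prod (volume.restrict (Ioc (p a) (p b)))) := by
    have hmeas : Measurable fun tl : ℝ × ℝ => layerKernel (p tl.1) (p c) tl.2 :=
      (measurable_layerKernel (p c)).comp
        ((hp.measurable.comp measurable_fst).prodMk measurable_snd)
    exact (hh.1.comp_fst _).bdd_smul 1 hmeas.aestronglyMeasurable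
      (Eventually.of_forall fun _ => abs_layerKernel_le_one _ _ _)
  calc ∫ t in a..b, (p t - p c) • h t
      = ∫ t in a..b, ∫ l in p a..p b, layerKernel (p t) (p c) l • h t := by
        refine intervalIntegral.integral_congr fun t ht => ?_
        rw [uIcc_of_le hab] at ht
        simp only [intervalIntegral.integral_smul_const,
          integral_layerKernel (hmem t ht) (hmem c hc)]
    _ = ∫ l in p a..p b, ∫ t in a..b, layerKernel (p t) (p c) l • h t := by
        simp only [intervalIntegral.integral_of_le hab,
          intervalIntegral.integral_of_le (hp hab)]
        exact integral_integral_swap hintegrable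

lemma norm_integral_sub_smul_le_of_monotone [CompleteSpace E] (hab : a ≤ b) (hp : Monotone p)
    (hh : IntervalIntegrable h volume a b) (hc : c ∈ Icc a b) :
    ‖∫ t in a..b, (p t - p c) • h t‖ ≤ alexiewiczNorm h a b * (p b - p a) := by
  rw [integral_sub_smul_eq_integral_layerKernel hab hp hh hc,
    ← abs_of_nonneg (sub_nonneg.2 (hp hab))]
  exact intervalIntegral.norm_integral_le_of_norm_le_const fun l _ =>
    norm_integral_layerKernel_smul_le hab hp hh (p c) l

lemma exists_monotone_sub_monotone_of_boundedVariationOn {α : Type*} [LinearOrder α] {g : α → ℝ}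
    {s : Set α} {a b : α} (hg : BoundedVariationOn g s) (ha : IsLeast s a) (hb : IsGreatest s b) :
    ∃ p q : α → ℝ, Monotone p ∧ Monotone q ∧ EqOn g (p - q) s ∧
      (p b - p a) + (q b - q a) = (eVariationOn g s).toReal := by
  obtain ⟨p₀, q₀, hp₀, hq₀, hg₀, hvar⟩ :=
    hg.locallyBoundedVariationOn.exists_monotoneOn_sub_monotoneOn'
  have hextend : ∀ p₀ : α → ℝ, MonotoneOn p₀ s → ∃ p, Monotone p ∧ EqOn p₀ p s := fun p₀ hp₀ =>
    hp₀.exists_monotone_extension (hp₀.map_isLeast ha).bddBelow (hp₀.map_isGreatest hb).bddAbove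
  obtain ⟨p, hp, hpeq⟩ := hextend p₀ hp₀
  obtain ⟨q, hq, hqeq⟩ := hextend q₀ hq₀
  refine ⟨p, q, hp, hq, fun t ht => ?_, ?_⟩
  · rw [hg₀, Pi.sub_apply, Pi.sub_apply, hpeq ht, hqeq ht]
  · rw [← hpeq ha.1, ← hpeq hb.1, ← hqeq ha.1, ← hqeq hb.1, hvar a ha.1 b hb.1,
      variationOnFromTo.eq_of_le _ _ (ha.2 hb.1),
      inter_eq_left.2 (show s ⊆ Icc a b from fun t ht => ⟨ha.2 ht, hb.2 ht⟩)]

lemma intervalIntegrable_smul_of_monotone {μ : Measure ℝ} (hp : Monotone p)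
    (hh : IntervalIntegrable h μ a b) : IntervalIntegrable (fun t => p t • h t) μ a b := by
  rw [intervalIntegrable_iff] at hh ⊢
  refine hh.bdd_smul (max |p (min a b)| |p (max a b)|) hp.measurable.aestronglyMeasurable ?_
  filter_upwards [ae_restrict_mem measurableSet_uIoc] with t ht
  exact abs_le_max_abs_abs (hp ht.1.le) (hp ht.2)

lemma intervalIntegrable_smul_of_boundedVariationOn {μ : Measure ℝ} (hab : a ≤ b)
    (hg : BoundedVariationOn g (Icc a b)) (hh : IntervalIntegrable h μ a b) :
    IntervalIntegrable (fun t => g t • h t) μ a b := by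
  obtain ⟨p, q, hp, hq, hgpq, -⟩ :=
    exists_monotone_sub_monotone_of_boundedVariationOn hg (isLeast_Icc hab) (isGreatest_Icc hab)
  refine ((intervalIntegrable_smul_of_monotone hp hh).sub
    (intervalIntegrable_smul_of_monotone hq hh)).congr fun t ht => ?_
  rw [uIoc_of_le hab] at ht
  simp only [hgpq (Ioc_subset_Icc_self ht), Pi.sub_apply, sub_smul]

lemma norm_integral_sub_smul_le_of_boundedVariationOn [CompleteSpace E] (hab : a ≤ b)
    (hg : BoundedVariationOn g (Icc a b)) (hh : IntervalIntegrable h volume a b)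
    (hc : c ∈ Icc a b) :
    ‖∫ t in a..b, (g t - g c) • h t‖ ≤
      alexiewiczNorm h a b * (eVariationOn g (Icc a b)).toReal := by
  obtain ⟨p, q, hp, hq, hgpq, hvar⟩ :=
    exists_monotone_sub_monotone_of_boundedVariationOn hg (isLeast_Icc hab) (isGreatest_Icc hab)
  have hintegrable : ∀ p : ℝ → ℝ, Monotone p →
      IntervalIntegrable (fun t => (p t - p c) • h t) volume a b := fun p hp =>
    intervalIntegrable_smul_of_monotone (fun s t hst => sub_le_sub_right (hp hst) (p c)) hh
  have hsplit : ∫ t in a..b, (g t - g c) • h t =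
      (∫ t in a..b, (p t - p c) • h t) - ∫ t in a..b, (q t - q c) • h t := by
    rw [← intervalIntegral.integral_sub (hintegrable p hp) (hintegrable q hq)]
    refine intervalIntegral.integral_congr fun t ht => ?_
    rw [uIcc_of_le hab] at ht
    simp only [hgpq ht, hgpq hc, Pi.sub_apply, ← sub_smul, sub_sub_sub_comm]
  calc ‖∫ t in a..b, (g t - g c) • h t‖
      ≤ ‖∫ t in a..b, (p t - p c) • h t‖ + ‖∫ t in a..b, (q t - q c) • h t‖ :=
        hsplit ▸ norm_sub_le _ _
    _ ≤ alexiewiczNorm h a b * (p b - p a) + alexiewiczNorm h a b * (q b - q a) :=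
        add_le_add (norm_integral_sub_smul_le_of_monotone hab hp hh hc)
          (norm_integral_sub_smul_le_of_monotone hab hq hh hc)
    _ = alexiewiczNorm h a b * (eVariationOn g (Icc a b)).toReal := by rw [← mul_add, hvar]

lemma le_mul_sInf {k r : ℝ} {s : Set ℝ} (hk : 0 ≤ k) (hs : s.Nonempty)
    (hr : ∀ y ∈ s, r ≤ k * y) : r ≤ k * sInf s := by
  rw [← smul_eq_mul, ← Real.sInf_smul_of_nonneg hk]
  refine le_csInf (hs.smul_set) ?_
  rintro _ ⟨y, hy, rfl⟩
  exact hr y hy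

lemma norm_integral_smul_le_of_boundedVariationOn [CompleteSpace E] (hab : a ≤ b)
    (hg : BoundedVariationOn g (Icc a b)) (hh : IntervalIntegrable h volume a b) :
    ‖∫ t in a..b, g t • h t‖ ≤
      ‖∫ t in a..b, h t‖ * sInf {r : ℝ | ∃ t ∈ Icc a b, r = |g t|} +
        alexiewiczNorm h a b * (eVariationOn g (Icc a b)).toReal := by
  rw [← sub_le_iff_le_add]
  refine le_mul_sInf (norm_nonneg _) ⟨|g a|, a, left_mem_Icc.2 hab, rfl⟩ ?_
  rintro _ ⟨c, hc, rfl⟩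
  rw [sub_le_iff_le_add]
  have hgch : IntervalIntegrable (fun t => g c • h t) volume a b := hh.smul (g c)
  have hsplit : ∫ t in a..b, g t • h t =
      g c • (∫ t in a..b, h t) + ∫ t in a..b, (g t - g c) • h t := by
    simp only [sub_smul]
    rw [intervalIntegral.integral_sub (intervalIntegrable_smul_of_boundedVariationOn hab hg hh)
      hgch, intervalIntegral.integral_smul, add_sub_cancel]
  calc ‖∫ t in a..b, g t • h t‖
      ≤ ‖g c • ∫ t in a..b, h t‖ + ‖∫ t in a..b, (g t - g c) • h t‖ := hsplit ▸ norm_add_le _ _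
    _ ≤ ‖∫ t in a..b, h t‖ * |g c| +
          alexiewiczNorm h a b * (eVariationOn g (Icc a b)).toReal := by
        rw [norm_smul, Real.norm_eq_abs, mul_comm |g c|]
        exact add_le_add_right (norm_integral_sub_smul_le_of_boundedVariationOn hab hg hh hc) _

theorem stmt13_general [CompleteSpace E] {x : ℝ} (hab : a ≤ b)
    (hf : IntegrableOn f (Icc (x - b) (x - a))) (hg : BoundedVariationOn g (Icc a b)) :
    IntegrableOn (fun t => g t • f (x - t)) (Icc a b) ∧
      ‖∫ t in a..b, g t • f (x - t)‖ ≤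
        ‖∫ u in (x - b)..(x - a), f u‖ * sInf {r : ℝ | ∃ t ∈ Icc a b, r = |g t|} +
          alexiewiczNorm f (x - b) (x - a) * (eVariationOn g (Icc a b)).toReal := by
  have hh : IntervalIntegrable (fun t => f (x - t)) volume a b := by
    have hf' := (intervalIntegrable_iff_integrableOn_Icc_of_le (sub_le_sub_left hab x)).2 hf
    simpa only [sub_sub_cancel] using (hf'.comp_sub_left x).symm
  refine ⟨(intervalIntegrable_iff_integrableOn_Icc_of_le hab).1
    (intervalIntegrable_smul_of_boundedVariationOn hab hg hh), ?_⟩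
  simpa only [intervalIntegral.integral_comp_sub_left, alexiewiczNorm_comp_sub_left] using
    norm_integral_smul_le_of_boundedVariationOn hab hg hh

end Convolution

/-- Proposition 8(b): for `f` locally integrable and `g` of bounded variation with support
in a compact interval `[a,b]`, the convolution `f∗g(x) = ∫_a^b f(x−t) g(t) dt` exists as a
Lebesgue integral for every `x` and
`|f∗g(x)| ≤ |∫_{x−b}^{x−a} f| · inf_{[a,b]} |g| + ‖f‖_{[x−b,x−a]} · V_{[a,b]} g`. -/
theorem stmt13 (f : ℝ → ℂ) (g : ℝ → ℝ) (a b : ℝ) (hab : a ≤ b)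
    (hf : ∀ c d : ℝ, IntegrableOn f (Set.Icc c d))
    (hg : BoundedVariationOn g (Set.Icc a b))
    (hsupp : ∀ t : ℝ, t ∉ Set.Icc a b → g t = 0) :
    ∀ x : ℝ,
      IntegrableOn (fun t : ℝ => f (x - t) * ((g t : ℝ) : ℂ)) (Set.Icc a b) ∧
      ‖∫ t in a..b, f (x - t) * ((g t : ℝ) : ℂ)‖ ≤
        ‖∫ u in (x - b)..(x - a), f u‖ * sInf {r : ℝ | ∃ t ∈ Set.Icc a b, r = |g t|} +
        sSup {r : ℝ | ∃ c d : ℝ, x - b ≤ c ∧ c ≤ d ∧ d ≤ x - a ∧ r = ‖∫ u in c..d, f u‖} *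
          (eVariationOn g (Set.Icc a b)).toReal := by
  intro x
  simpa only [Complex.real_smul, mul_comm, alexiewiczNorm] using
    stmt13_general hab (hf (x - b) (x - a)) hg
end
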